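/- Let N > 1 be an integer and let {m(r)} be a family of integers indexed by r = (r₁,r₂) ∈ (1/N)ℤ²∖ℤ², with m(r) = 0 for all but finitely many r. Suppose ∑_r m(r)(N r₁)² ≡ 0 and ∑_r m(r)(N r₂)² ≡ 0 modulo gcd(2,N)·N, that ∑_r m(r)(N r₁)(N r₂) ≡ 0 (mod N), and that ∑_r m(r)·gcd(12,N) ≡ 0 (mod 12). Then the function h(τ) = ζ ∏_r g_r(τ)^{m(r)}, with ζ = ∏_r e^{πi r₂(1−r₁) m(r)}, satisfies h(γτ) = h(τ) for all γ ∈ Γ(N) and τ ∈ ℍ, and its Fourier coefficients lie in the cyclotomic field ℚ(ζ_N). -/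

import Mathlib

open Complex UpperHalfPlane Matrix MatrixGroups CongruenceSubgroup
open scoped UpperHalfPlane Manifold Real

noncomputable section

/-- `N·τ` as a point of the upper half-plane (junk value `τ` if `N = 0`). -/
def hsmul (N : ℕ) (τ : UpperHalfPlane) : UpperHalfPlane :=
  if hN : 0 < N then
    ⟨(N : ℂ) * τ, by
      have h0 : (0 : ℝ) < (N : ℝ) := by exact_mod_cast hN
      simpa [Complex.mul_im] using mul_pos h0 τ.2⟩
  else τ

/-- The Siegel function `g_r(τ)` given by its infinite product expansion. -/
def siegel (r : ℚ × ℚ) (τ : ℍ) : ℂ :=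
  -Complex.exp ((Real.pi : ℂ) * Complex.I * (((r.1 : ℂ) ^ 2 - (r.1 : ℂ) + 1 / 6) * τ)) *
    Complex.exp ((Real.pi : ℂ) * Complex.I * (r.2 : ℂ) * ((r.1 : ℂ) - 1)) *
    (1 - Complex.exp (2 * (Real.pi : ℂ) * Complex.I * ((r.1 : ℂ) * τ + (r.2 : ℂ)))) *
    ∏' n : ℕ,
      ((1 - Complex.exp (2 * (Real.pi : ℂ) * Complex.I *
          (((n : ℂ) + 1 + (r.1 : ℂ)) * τ + (r.2 : ℂ)))) *
       (1 - Complex.exp (2 * (Real.pi : ℂ) * Complex.I *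
          (((n : ℂ) + 1 - (r.1 : ℂ)) * τ - (r.2 : ℂ)))))

/-- The lattice point `ω = m·τ + n` attached to a pair `(m,n) ∈ ℤ²`. -/
def lat (τ : ℍ) (p : ℤ × ℤ) : ℂ := (p.1 : ℂ) * τ + (p.2 : ℂ)

/-- `g₂(τ) = 60 ∑_{ω ∈ L_τ ∖ {0}} ω⁻⁴`. -/
def g2C (τ : ℍ) : ℂ := 60 * ∑' p : {p : ℤ × ℤ // p ≠ 0}, ((lat τ p.1) ^ 4)⁻¹

/-- `g₃(τ) = 140 ∑_{ω ∈ L_τ ∖ {0}} ω⁻⁶`. -/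
def g3C (τ : ℍ) : ℂ := 140 * ∑' p : {p : ℤ × ℤ // p ≠ 0}, ((lat τ p.1) ^ 6)⁻¹

/-- The discriminant `Δ(τ) = g₂(τ)³ - 27 g₃(τ)²`. -/
def discC (τ : ℍ) : ℂ := g2C τ ^ 3 - 27 * g3C τ ^ 2

/-- The Weierstrass `℘`-function relative to the lattice `L_τ = ℤτ + ℤ`. -/
def wpC (z : ℂ) (τ : ℍ) : ℂ :=
  (z ^ 2)⁻¹ + ∑' p : {p : ℤ × ℤ // p ≠ 0}, (((z - lat τ p.1) ^ 2)⁻¹ - ((lat τ p.1) ^ 2)⁻¹)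

/-- The Fricke function `f_r(τ)`. -/
def fricke (r : ℚ × ℚ) (τ : ℍ) : ℂ :=
  -(2 ^ 7 * 3 ^ 5) * (g2C τ * g3C τ / discC τ) * wpC ((r.1 : ℂ) * τ + (r.2 : ℂ)) τ

/-- The elliptic modular `j`-invariant. -/
def jinv (τ : ℍ) : ℂ := 1728 * g2C τ ^ 3 / discC τ

/-- The Dedekind eta function. -/
def etaC (τ : ℍ) : ℂ :=
  (Real.sqrt (2 * Real.pi) : ℂ) * Complex.exp (2 * (Real.pi : ℂ) * Complex.I / 16) *
    Complex.exp (2 * (Real.pi : ℂ) * Complex.I * τ / 24) *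
    ∏' n : ℕ, (1 - Complex.exp (2 * (Real.pi : ℂ) * Complex.I * ((n : ℂ) + 1) * τ))

/-- `r ∈ ℚ² ∖ ℤ²`. -/
def NonIntegral (r : ℚ × ℚ) : Prop := ¬ ∃ a b : ℤ, r = ((a : ℚ), (b : ℚ))

/-- `r ∈ (1/N)ℤ²`. -/
def InDen (N : ℕ) (r : ℚ × ℚ) : Prop := ∃ a b : ℤ, r = ((a : ℚ) / N, (b : ℚ) / N)

/-- Membership in `Γ^1(N)`: `a ≡ d ≡ 1` and `b ≡ 0 (mod N)`. -/
def GammaUpper (N : ℕ) (γ : SL(2, ℤ)) : Prop :=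
  ((γ 0 0 : ℤ) : ZMod N) = 1 ∧ ((γ 1 1 : ℤ) : ZMod N) = 1 ∧ ((γ 0 1 : ℤ) : ZMod N) = 0

/-- The transpose action `ᵗγ r = (a r₁ + c r₂, b r₁ + d r₂)` of `γ = [[a,b],[c,d]]`. -/
def tAct (γ : SL(2, ℤ)) (r : ℚ × ℚ) : ℚ × ℚ :=
  ((γ 0 0 : ℚ) * r.1 + (γ 1 0 : ℚ) * r.2, (γ 0 1 : ℚ) * r.1 + (γ 1 1 : ℚ) * r.2)

/-- The power `q^{n/d} = e^{2πi(n/d)τ}`. -/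
def qpow (d : ℕ) (n : ℤ) (τ : ℍ) : ℂ :=
  Complex.exp (2 * (Real.pi : ℂ) * Complex.I * ((n : ℂ) / (d : ℂ)) * τ)

/-- `h` is a weakly holomorphic modular function for `Γ₁(N)` with rational
Fourier coefficients: holomorphic on `ℍ`, `Γ₁(N)`-invariant, with a convergent
`q`-expansion at `i∞` having rational coefficients, and meromorphic at every cusp. -/
def IsWeaklyHolo1 (N : ℕ) (h : ℍ → ℂ) : Prop :=
  MDifferentiable 𝓘(ℂ) 𝓘(ℂ) h ∧
  (∀ γ ∈ Gamma1 N, ∀ τ : ℍ, h (γ • τ) = h τ) ∧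
  (∃ n₀ : ℤ, ∃ c : ℕ → ℚ,
    ∀ τ : ℍ, HasSum (fun n : ℕ => (c n : ℂ) * qpow 1 (n₀ + n) τ) (h τ)) ∧
  (∀ γ : SL(2, ℤ), ∃ n₀ : ℤ, ∃ c : ℕ → ℂ,
    ∀ τ : ℍ, HasSum (fun n : ℕ => c n * qpow N (n₀ + n) τ) (h (γ • τ)))

/-- `h` is a weakly holomorphic modular function for `Γ^1(N)` with rational
Fourier coefficients (the expansion at `i∞` being in powers of `q^{1/N}`). -/
def IsWeaklyHoloUp (N : ℕ) (h : ℍ → ℂ) : Prop :=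
  MDifferentiable 𝓘(ℂ) 𝓘(ℂ) h ∧
  (∀ γ : SL(2, ℤ), GammaUpper N γ → ∀ τ : ℍ, h (γ • τ) = h τ) ∧
  (∃ n₀ : ℤ, ∃ c : ℕ → ℚ,
    ∀ τ : ℍ, HasSum (fun n : ℕ => (c n : ℂ) * qpow N (n₀ + n) τ) (h τ)) ∧
  (∀ γ : SL(2, ℤ), ∃ n₀ : ℤ, ∃ c : ℕ → ℂ,
    ∀ τ : ℍ, HasSum (fun n : ℕ => c n * qpow N (n₀ + n) τ) (h (γ • τ)))

/-- The Weierstrass-unit generator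
`f^1_{m,N} = (f_{(1/N,0)} - f_{(1/m,0)})/(f_{(2/m,0)} - f_{(1/m,0)})`. -/
def fUnit (m N : ℕ) (τ : ℍ) : ℂ :=
  (fricke ((1 : ℚ) / N, 0) τ - fricke ((1 : ℚ) / m, 0) τ) /
    (fricke ((2 : ℚ) / m, 0) τ - fricke ((1 : ℚ) / m, 0) τ)

/-- The cocycle constant `ζ = ∏_r e^{πi r₂(1-r₁)m(r)}`. -/
def zetaFactor (m : ℚ × ℚ → ℤ) : ℂ :=
  ∏ᶠ r : ℚ × ℚ, Complex.exp ((Real.pi : ℂ) * Complex.I * (r.2 : ℂ) * (1 - (r.1 : ℂ)) * (m r : ℂ))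

/-- The product `ζ ∏_r g_r(τ)^{m(r)}`. -/
def siegelProd (m : ℚ × ℚ → ℤ) (τ : ℍ) : ℂ :=
  zetaFactor m * ∏ᶠ r : ℚ × ℚ, siegel r τ ^ m r

/-!
Write `e(z) = exp (2πiz)` and `z = r₁τ + r₂`. Then `g_r(τ) = e(r₁z / 2) φ(z, τ)`, where
`φ = iθ₁ / η` is a theta quotient. As functions of `z`, both `φ(z, τ)` and
`e(-z² / 2τ) φ(z / τ, -1 / τ)` have simple zeros on the lattice `ℤ + ℤτ` and the same factors of
automorphy, so they are proportional by Liouville's theorem; the derivatives at `z = 0` reduce the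
constant to the transformation law of `η²`. Hence `g_r(γτ) = ε(γ) g_{ᵗγr}(τ)` for `γ ∈ SL₂(ℤ)`,
where `ε(γ)` is a twelfth root of unity, equal to `1` if `γ ∈ Γ(12)`. For `γ ∈ Γ(N)` the vector
`ᵗγr` is an integral translate of `r`, which changes `g_r` by an explicit `2N`-th root of unity. In
the product over all `r` these roots of unity cancel by the quadratic relations, and the powers of
`ε(γ)` by the condition modulo `12`.

In terms of `x = q^{1/N}`, each normalized `g_r` is a fractional power of `x` times a product of
factors `1 - ζ_N^k x^j` that has no zeros on the unit disc, so integral powers of that product have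
Taylor coefficients in `ℚ(ζ_N)`. The quadratic relation for `r₁` and the condition modulo `12` make
the total exponent of `x` an integer.
-/

/-- The character `e(z) = exp (2πiz)` of `ℂ / ℤ`. -/
def expTwoPiI (z : ℂ) : ℂ := Complex.exp (2 * (π : ℂ) * Complex.I * z)

local notation "𝕖" => expTwoPiI

section ExpTwoPiI

lemma expTwoPiI_zero : 𝕖 0 = 1 := by simp [expTwoPiI]

lemma expTwoPiI_add (z w : ℂ) : 𝕖 (z + w) = 𝕖 z * 𝕖 w := by
  simp only [expTwoPiI, ← Complex.exp_add, mul_add]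

lemma expTwoPiI_neg (z : ℂ) : 𝕖 (-z) = (𝕖 z)⁻¹ := by
  simp only [expTwoPiI, ← Complex.exp_neg, mul_neg]

lemma expTwoPiI_ne_zero (z : ℂ) : 𝕖 z ≠ 0 := Complex.exp_ne_zero _

lemma expTwoPiI_eq_one_iff {z : ℂ} : 𝕖 z = 1 ↔ ∃ n : ℤ, z = n := by
  rw [expTwoPiI, Complex.exp_eq_one_iff]
  refine exists_congr fun n ↦ ?_
  rw [mul_comm (n : ℂ), mul_right_inj' Complex.two_pi_I_ne_zero]

lemma expTwoPiI_intCast (n : ℤ) : 𝕖 n = 1 := expTwoPiI_eq_one_iff.2 ⟨n, rfl⟩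

lemma expTwoPiI_add_intCast (z : ℂ) (n : ℤ) : 𝕖 (z + n) = 𝕖 z := by
  rw [expTwoPiI_add, expTwoPiI_intCast, mul_one]

lemma expTwoPiI_half : 𝕖 (1 / 2) = -1 := by
  rw [expTwoPiI, ← Complex.exp_pi_mul_I]
  ring_nf

lemma expTwoPiI_neg_quarter : 𝕖 (-1 / 4) = -Complex.I := by
  rw [← Complex.inv_I, ← Complex.exp_pi_div_two_mul_I, ← Complex.exp_neg, expTwoPiI]
  ring_nf

lemma expTwoPiI_zpow (z : ℂ) (n : ℤ) : 𝕖 z ^ n = 𝕖 (n * z) := by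
  rw [expTwoPiI, expTwoPiI, ← Complex.exp_int_mul, mul_left_comm]

lemma expTwoPiI_pow (z : ℂ) (n : ℕ) : 𝕖 z ^ n = 𝕖 (n * z) := by
  exact_mod_cast expTwoPiI_zpow z n

lemma expTwoPiI_sum {ι : Type*} (s : Finset ι) (f : ι → ℂ) :
    𝕖 (∑ i ∈ s, f i) = ∏ i ∈ s, 𝕖 (f i) := by
  simp only [expTwoPiI, Finset.mul_sum, Complex.exp_sum]

lemma hasDerivAt_expTwoPiI (z : ℂ) : HasDerivAt 𝕖 (2 * π * Complex.I * 𝕖 z) z :=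
  ((hasDerivAt_id z).const_mul (2 * (π : ℂ) * Complex.I)).cexp.congr_deriv
    (by rw [mul_one]; exact mul_comm _ _)

lemma differentiable_expTwoPiI : Differentiable ℂ 𝕖 :=
  fun z ↦ (hasDerivAt_expTwoPiI z).differentiableAt

lemma norm_expTwoPiI_lt_one (τ : ℍ) : ‖𝕖 τ‖ < 1 := by
  simpa [expTwoPiI] using UpperHalfPlane.norm_exp_two_pi_I_lt_one τ

end ExpTwoPiI

/-- The Euler product `∏_{n ≥ 1} (1 - q ^ n u)`, that is, the `q`-Pochhammer symbol
`(qu; q)_∞`. -/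
def eulerProd (q u : ℂ) : ℂ := ∏' n : ℕ, (1 - q ^ (n + 1) * u)

section EulerProd

variable {q : ℂ}

lemma summable_norm_pow_succ_mul (hq : ‖q‖ < 1) (u : ℂ) :
    Summable fun n : ℕ ↦ ‖-(q ^ (n + 1) * u)‖ := by
  simp only [norm_neg, norm_mul, norm_pow]
  exact ((summable_nat_add_iff 1).2 (summable_geometric_of_lt_one (norm_nonneg _) hq)).mul_right _

lemma multipliable_eulerProd (hq : ‖q‖ < 1) (u : ℂ) :
    Multipliable fun n : ℕ ↦ 1 - q ^ (n + 1) * u := by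
  simpa only [sub_eq_add_neg] using
    multipliable_one_add_of_summable (summable_norm_pow_succ_mul hq u)

lemma eulerProd_ne_zero (hq : ‖q‖ < 1) {u : ℂ} (hu : ∀ n : ℕ, q ^ (n + 1) * u ≠ 1) :
    eulerProd q u ≠ 0 := by
  simpa only [eulerProd, sub_eq_add_neg] using
    tprod_one_add_ne_zero_of_summable (f := fun n : ℕ ↦ -(q ^ (n + 1) * u))
      (fun n ↦ by simpa only [← sub_eq_add_neg] using sub_ne_zero.2 (hu n).symm)
      (summable_norm_pow_succ_mul hq u)

lemma eulerProd_eq_one_sub_mul (hq : ‖q‖ < 1) (u : ℂ) :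
    eulerProd q u = (1 - q * u) * eulerProd q (q * u) := by
  have hshift (n : ℕ) : q ^ (n + 1 + 1) * u = q ^ (n + 1) * (q * u) := by ring
  simp only [eulerProd]
  rw [tprod_eq_zero_mul']
  · simp [hshift]
  · simpa only [hshift] using multipliable_eulerProd hq (q * u)

lemma differentiable_eulerProd (hq : ‖q‖ < 1) : Differentiable ℂ (eulerProd q) := by
  rw [← differentiableOn_univ]
  have hprod : HasProdLocallyUniformlyOn (fun (n : ℕ) (u : ℂ) ↦ 1 + -(q ^ (n + 1) * u))
      (fun u ↦ ∏' n : ℕ, (1 + -(q ^ (n + 1) * u))) Set.univ := by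
    refine hasProdLocallyUniformlyOn_of_forall_compact isOpen_univ fun K _ hK ↦ ?_
    obtain ⟨B, hB⟩ := hK.isBounded.exists_norm_le
    refine (((summable_nat_add_iff 1).2
      (summable_geometric_of_lt_one (norm_nonneg _) hq)).mul_right B).hasProdUniformlyOn_nat_one_add
      hK (.of_forall fun n u hu ↦ ?_) fun _ ↦ by fun_prop
    simp only [norm_neg, norm_mul, norm_pow]
    gcongr
    exact hB u hu
  have hdiff := hprod.differentiableOn (.of_forall fun s ↦ by
    simpa [Finset.prod_fn] using DifferentiableOn.finsetProd (fun _ _ ↦ by fun_prop)) isOpen_univ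
  simpa only [eulerProd, sub_eq_add_neg] using! hdiff

end EulerProd

section Quotient

open scoped Topology

lemma differentiable_dslope {f : ℂ → ℂ} (hf : Differentiable ℂ f) (z : ℂ) :
    Differentiable ℂ (dslope f z) :=
  differentiableOn_univ.1 ((Complex.differentiableOn_dslope Filter.univ_mem).2 hf.differentiableOn)

lemma exists_differentiable_mul_eq {f g : ℂ → ℂ} (hf : Differentiable ℂ f)
    (hg : Differentiable ℂ g) (hsimple : ∀ z, f z = 0 → deriv f z ≠ 0)
    (hvanish : ∀ z, f z = 0 → g z = 0) :
    ∃ R : ℂ → ℂ, Differentiable ℂ R ∧ ∀ z, f z * R z = g z := by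
  classical
  refine ⟨fun z ↦ if f z = 0 then deriv g z / deriv f z else g z / f z, fun z ↦ ?_, fun z ↦ ?_⟩
  · by_cases hz : f z = 0
    · have hslope : dslope f z z ≠ 0 := by simpa only [dslope_same] using hsimple z hz
      refine (((differentiable_dslope hg z) z).div ((differentiable_dslope hf z) z)
        hslope).congr_of_eventuallyEq ?_
      filter_upwards [(differentiable_dslope hf z).continuous.continuousAt.eventually_ne hslope]
        with w hw
      rcases eq_or_ne w z with rfl | hwz
      · simp [hz]
      · have hsub : w - z ≠ 0 := sub_ne_zero.2 hwz
        rw [dslope_of_ne _ hwz, slope_def_field, hz, sub_zero] at hw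
        have hfw : f w ≠ 0 := fun h ↦ hw (by rw [h, zero_div])
        simp only [hfw, if_false, Pi.div_apply]
        rw [dslope_of_ne _ hwz, dslope_of_ne _ hwz, slope_def_field, slope_def_field, hz,
          hvanish z hz, sub_zero, sub_zero, div_div_div_cancel_right₀ hsub]
    · refine ((hg z).div (hf z) hz).congr_of_eventuallyEq ?_
      filter_upwards [hf.continuous.continuousAt.eventually_ne hz] with w hw
      simp only [hw, if_false, Pi.div_apply]
  · by_cases hz : f z = 0
    · simp only [hz, hvanish z hz, zero_mul]
    · simp only [hz, if_false, mul_div_cancel₀ _ hz]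

lemma eq_of_mul_eq_mul_of_differentiable {f R S : ℂ → ℂ} (hf : Differentiable ℂ f)
    (hR : Differentiable ℂ R) (hS : Differentiable ℂ S) (hne : ∃ z, f z ≠ 0)
    (h : ∀ z, f z * R z = f z * S z) (z : ℂ) : R z = S z := by
  have hfR : AnalyticOnNhd ℂ f Set.univ := fun z _ ↦ hf.analyticAt z
  have hRS : AnalyticOnNhd ℂ (R - S) Set.univ := fun z _ ↦ (hR.sub hS).analyticAt z
  rcases hfR.eq_zero_or_eq_zero_of_mul_eq_zero hRS
    (fun z _ ↦ by simp [mul_sub, h]) isPreconnected_univ with hzero | hzero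
  · exact absurd (hzero hne.choose trivial) hne.choose_spec
  · exact sub_eq_zero.1 (hzero z trivial)

lemma apply_eq_apply_of_periodic (L : PeriodPair) {R : ℂ → ℂ} (hR : Differentiable ℂ R)
    (h₁ : Function.Periodic R L.ω₁) (h₂ : Function.Periodic R L.ω₂) (z w : ℂ) : R z = R w := by
  refine hR.apply_eq_apply_of_bounded (IsZLattice.isCompact_range_of_periodic L.lattice R
    hR.continuous fun z w hw ↦ ?_).isBounded z w
  obtain ⟨m, n, rfl⟩ := PeriodPair.mem_lattice.1 hw
  rw [← add_assoc, h₂.int_mul n, h₁.int_mul m]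

/-- The quotient `g / f` is elliptic without poles, hence constant by Liouville's theorem. -/
lemma exists_eq_const_mul_of_quasiPeriodic (L : PeriodPair) {f g j₁ j₂ : ℂ → ℂ}
    (hf : Differentiable ℂ f) (hg : Differentiable ℂ g)
    (hsimple : ∀ z, f z = 0 → deriv f z ≠ 0) (hvanish : ∀ z, f z = 0 → g z = 0)
    (hf₁ : ∀ z, f (z + L.ω₁) = j₁ z * f z) (hg₁ : ∀ z, g (z + L.ω₁) = j₁ z * g z)
    (hf₂ : ∀ z, f (z + L.ω₂) = j₂ z * f z) (hg₂ : ∀ z, g (z + L.ω₂) = j₂ z * g z) :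
    ∃ c, ∀ z, g z = c * f z := by
  obtain ⟨R, hR, hfR⟩ := exists_differentiable_mul_eq hf hg hsimple hvanish
  have hne : ∃ z, f z ≠ 0 := by
    by_contra! h
    exact hsimple 0 (h 0) (by simp [funext h])
  have hperiodic {ω : ℂ} {j : ℂ → ℂ} (hfω : ∀ z, f (z + ω) = j z * f z)
      (hgω : ∀ z, g (z + ω) = j z * g z) : Function.Periodic R ω := by
    have hne' : ∃ z, f (z + ω) ≠ 0 := hne.imp' (· - ω) fun z hz ↦ by simpa using hz
    refine eq_of_mul_eq_mul_of_differentiable (f := fun z ↦ f (z + ω)) (by fun_prop)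
      (by fun_prop) hR hne' fun z ↦ ?_
    rw [hfR, hgω, hfω, mul_assoc, hfR]
  refine ⟨R 0, fun z ↦ ?_⟩
  rw [← hfR, apply_eq_apply_of_periodic L hR (hperiodic hf₁ hg₁) (hperiodic hf₂ hg₂) z 0, mul_comm]

end Quotient

/-- The quotient `i θ₁(z, τ) / η(τ)` of Jacobi's theta function by Dedekind's eta function, in
product form. It is a Jacobi form of weight `0` and index `1 / 2` with multiplier system. -/
def thetaQuotient (z τ : ℂ) : ℂ :=
  𝕖 (τ / 12) * (𝕖 (z / 2) - 𝕖 (-z / 2)) * eulerProd (𝕖 τ) (𝕖 z) * eulerProd (𝕖 τ) (𝕖 (-z))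

section ThetaQuotient

lemma differentiable_thetaQuotient (τ : ℍ) : Differentiable ℂ fun z ↦ thetaQuotient z τ := by
  have := differentiable_eulerProd (norm_expTwoPiI_lt_one τ)
  have := differentiable_expTwoPiI
  unfold thetaQuotient
  fun_prop

lemma thetaQuotient_zero (τ : ℂ) : thetaQuotient 0 τ = 0 := by simp [thetaQuotient]

lemma thetaQuotient_add_one (z τ : ℂ) : thetaQuotient (z + 1) τ = -thetaQuotient z τ := by
  have h₁ : 𝕖 ((z + 1) / 2) = -𝕖 (z / 2) := by
    rw [add_div, expTwoPiI_add, expTwoPiI_half, mul_neg_one]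
  have h₂ : 𝕖 (-(z + 1) / 2) = -𝕖 (-z / 2) := by
    rw [neg_div, expTwoPiI_neg, h₁, neg_div, expTwoPiI_neg, inv_neg]
  have h₃ : 𝕖 (z + 1) = 𝕖 z := by simpa using expTwoPiI_add_intCast z 1
  rw [thetaQuotient, h₁, h₂, expTwoPiI_neg (z + 1), h₃, thetaQuotient, expTwoPiI_neg z]
  ring

lemma thetaQuotient_add_self (z : ℂ) (τ : ℍ) :
    thetaQuotient (z + τ) τ = -𝕖 (-τ / 2 - z) * thetaQuotient z τ := by
  have hfactor : eulerProd (𝕖 τ) (𝕖 z) = (1 - 𝕖 (z + τ)) * eulerProd (𝕖 τ) (𝕖 (z + τ)) := by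
    rw [add_comm z, expTwoPiI_add]
    exact eulerProd_eq_one_sub_mul (norm_expTwoPiI_lt_one τ) _
  have hfactor_neg :
      eulerProd (𝕖 τ) (𝕖 (-(z + τ))) = (1 - 𝕖 (-z)) * eulerProd (𝕖 τ) (𝕖 (-z)) := by
    have hneg : 𝕖 (-z) = 𝕖 τ * 𝕖 (-(z + τ)) := by rw [← expTwoPiI_add]; ring_nf
    rw [hneg]
    exact eulerProd_eq_one_sub_mul (norm_expTwoPiI_lt_one τ) _
  have hexp : (𝕖 ((z + τ) / 2) - 𝕖 (-(z + τ) / 2)) * (1 - 𝕖 (-z)) =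
      -𝕖 (-τ / 2 - z) * (𝕖 (z / 2) - 𝕖 (-z / 2)) * (1 - 𝕖 (z + τ)) := by
    simp only [sub_mul, mul_sub, neg_mul, mul_one, ← expTwoPiI_add]
    ring_nf
  simp only [thetaQuotient]
  rw [hfactor, hfactor_neg]
  linear_combination 𝕖 (τ / 12) * eulerProd (𝕖 τ) (𝕖 (z + τ)) * eulerProd (𝕖 τ) (𝕖 (-z)) * hexp

lemma thetaQuotient_add_intCast (z τ : ℂ) (n : ℤ) :
    thetaQuotient (z + n) τ = 𝕖 (n / 2) * thetaQuotient z τ := by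
  have hperiodic : Function.Periodic (fun z ↦ 𝕖 (-z / 2) * thetaQuotient z τ) 1 := fun z ↦ by
    have hsign : 𝕖 (-(z + 1) / 2) = -𝕖 (-z / 2) := by
      have h := expTwoPiI_add (-(z + 1) / 2) (1 / 2)
      rw [expTwoPiI_half, show -(z + 1) / 2 + 1 / 2 = -z / 2 by ring] at h
      rw [h, mul_neg_one, neg_neg]
    simp only [thetaQuotient_add_one, hsign, neg_mul_neg]
  have h := hperiodic.int_mul n z
  simp only [mul_one] at h
  refine mul_left_cancel₀ (expTwoPiI_ne_zero (-(z + n) / 2)) ?_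
  rw [h, ← mul_assoc, ← expTwoPiI_add]
  ring_nf

lemma thetaQuotient_add_intCast_mul (z : ℂ) (τ : ℍ) (k : ℤ) :
    thetaQuotient (z + k * τ) τ = 𝕖 (-k / 2 - k ^ 2 * τ / 2 - k * z) * thetaQuotient z τ := by
  have hτ := τ.ne_zero
  have hperiodic :
      Function.Periodic (fun z ↦ 𝕖 ((z ^ 2 + z) / (2 * τ)) * thetaQuotient z τ) τ := fun z ↦ by
    have hexp : 𝕖 (((z + τ) ^ 2 + (z + τ)) / (2 * τ)) * 𝕖 (-τ / 2 - z) =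
        -𝕖 ((z ^ 2 + z) / (2 * τ)) := by
      rw [← mul_neg_one (𝕖 ((z ^ 2 + z) / (2 * τ))), ← expTwoPiI_half, ← expTwoPiI_add,
        ← expTwoPiI_add]
      congr 1
      field_simp
      ring
    simp only [thetaQuotient_add_self]
    linear_combination -thetaQuotient z τ * hexp
  have h := hperiodic.int_mul k z
  refine mul_left_cancel₀ (expTwoPiI_ne_zero (((z + k * τ) ^ 2 + (z + k * τ)) / (2 * τ))) ?_
  rw [h, ← mul_assoc, ← expTwoPiI_add]
  congr 2
  field_simp
  ring

lemma thetaQuotient_add_lattice (z : ℂ) (τ : ℍ) (k l : ℤ) :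
    thetaQuotient (z + (k * τ + l)) τ =
      𝕖 ((k + l) / 2 - k ^ 2 * τ / 2 - k * z) * thetaQuotient z τ := by
  rw [← add_assoc, thetaQuotient_add_intCast, thetaQuotient_add_intCast_mul, ← mul_assoc,
    ← expTwoPiI_add, ← expTwoPiI_add_intCast _ k]
  ring_nf

lemma thetaQuotient_eq_zero_iff {z : ℂ} {τ : ℍ} :
    thetaQuotient z τ = 0 ↔ ∃ k l : ℤ, z = k * τ + l := by
  refine ⟨fun hzero ↦ ?_, ?_⟩
  · have hq := norm_expTwoPiI_lt_one τ
    simp only [thetaQuotient, mul_eq_zero, expTwoPiI_ne_zero, false_or] at hzero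
    contrapose! hzero
    refine ⟨⟨fun h ↦ ?_, eulerProd_ne_zero hq fun n h ↦ ?_⟩, eulerProd_ne_zero hq fun n h ↦ ?_⟩
    · have hone : 𝕖 z = 1 := by
        rw [← mul_inv_cancel₀ (expTwoPiI_ne_zero (-z / 2)), ← expTwoPiI_neg, ← neg_div, neg_neg]
        nth_rw 1 [← sub_eq_zero.1 h]
        rw [← expTwoPiI_add, add_halves]
      obtain ⟨l, hl⟩ := expTwoPiI_eq_one_iff.1 hone
      exact hzero 0 l (by rw [hl, Int.cast_zero, zero_mul, zero_add])
    · rw [expTwoPiI_pow, ← expTwoPiI_add, expTwoPiI_eq_one_iff] at h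
      obtain ⟨l, hl⟩ := h
      exact hzero (-(n + 1)) l (by push_cast at hl ⊢; linear_combination hl)
    · rw [expTwoPiI_pow, ← expTwoPiI_add, expTwoPiI_eq_one_iff] at h
      obtain ⟨l, hl⟩ := h
      exact hzero (n + 1) (-l) (by push_cast at hl ⊢; linear_combination -hl)
  · rintro ⟨k, l, rfl⟩
    rw [← zero_add (_ + _), thetaQuotient_add_lattice, thetaQuotient_zero, mul_zero]

lemma eta_eq_expTwoPiI_mul_eulerProd (τ : ℂ) :
    ModularForm.eta τ = 𝕖 (τ / 24) * eulerProd (𝕖 τ) 1 := by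
  simp only [ModularForm.eta, eulerProd, ModularForm.eta_q_eq_pow, mul_one]
  congr 1
  simp only [Function.Periodic.qParam, expTwoPiI]
  push_cast
  ring_nf

lemma hasDerivAt_thetaQuotient_zero (τ : ℍ) :
    HasDerivAt (fun z ↦ thetaQuotient z τ) (2 * π * Complex.I * ModularForm.eta τ ^ 2) 0 := by
  have hsine : HasDerivAt (fun z ↦ 𝕖 (z / 2) - 𝕖 (-z / 2)) (2 * π * Complex.I) 0 := by
    have hpos := (hasDerivAt_expTwoPiI (0 / 2)).comp 0 ((hasDerivAt_id (0 : ℂ)).div_const 2)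
    have hneg := (hasDerivAt_expTwoPiI (-0 / 2)).comp 0 ((hasDerivAt_neg (0 : ℂ)).div_const 2)
    refine (hpos.sub hneg).congr_deriv ?_
    rw [neg_zero, zero_div, expTwoPiI_zero]
    ring
  have hregular : DifferentiableAt ℂ
      (fun z ↦ 𝕖 (τ / 12) * eulerProd (𝕖 τ) (𝕖 z) * eulerProd (𝕖 τ) (𝕖 (-z))) 0 := by
    have := differentiable_eulerProd (norm_expTwoPiI_lt_one τ)
    have := differentiable_expTwoPiI
    fun_prop
  have hprod := (hsine.mul hregular.hasDerivAt).congr_deriv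
    (g' := 2 * π * Complex.I * ModularForm.eta τ ^ 2) (by
      have hhalf : 𝕖 (τ / 12) = 𝕖 (τ / 24) ^ 2 := by
        rw [expTwoPiI_pow]
        push_cast
        ring_nf
      simp only [neg_zero, zero_div, sub_self, zero_mul, add_zero, expTwoPiI_zero,
        eta_eq_expTwoPiI_mul_eulerProd, hhalf]
      ring)
  refine hprod.congr_of_eventuallyEq (.of_forall fun z ↦ ?_)
  simp only [thetaQuotient, Pi.mul_apply]
  ring

lemma deriv_thetaQuotient_ne_zero {z : ℂ} {τ : ℍ} (hz : thetaQuotient z τ = 0) :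
    deriv (fun z ↦ thetaQuotient z τ) z ≠ 0 := by
  obtain ⟨k, l, rfl⟩ := thetaQuotient_eq_zero_iff.1 hz
  have hfactor : DifferentiableAt ℂ (fun w : ℂ ↦ 𝕖 ((k + l) / 2 - k ^ 2 * τ / 2 - k * w)) 0 := by
    have := differentiable_expTwoPiI
    fun_prop
  have hderiv := hfactor.hasDerivAt.mul (hasDerivAt_thetaQuotient_zero τ)
  have hshift : deriv (fun w ↦ thetaQuotient (w + (k * τ + l)) τ) 0 =
      deriv (fun z ↦ thetaQuotient z τ) (k * τ + l) := by
    rw [deriv_comp_add_const (fun z ↦ thetaQuotient z τ), zero_add]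
  rw [← hshift, funext fun w ↦ thetaQuotient_add_lattice w τ k l]
  refine hderiv.deriv.trans_ne ?_
  rw [thetaQuotient_zero, mul_zero, zero_add]
  exact mul_ne_zero (expTwoPiI_ne_zero _)
    (mul_ne_zero Complex.two_pi_I_ne_zero (pow_ne_zero 2 (ModularForm.eta_ne_zero τ.2)))

lemma eta_neg_inv_sq (τ : ℍ) :
    ModularForm.eta (-1 / τ) ^ 2 = -Complex.I * τ * ModularForm.eta τ ^ 2 := by
  have hsqrt (z : ℂ) : Complex.sqrt z ^ 2 = z := by
    rw [Complex.sqrt, ← Nat.cast_ofNat, Complex.cpow_nat_inv_pow z two_ne_zero]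
  have heta : ModularForm.eta (-1 / τ) =
      (Complex.sqrt Complex.I)⁻¹ * (Complex.sqrt τ * ModularForm.eta τ) := by
    simpa using ModularForm.eta_comp_eq_csqrt_I_inv τ.2
  rw [heta, mul_pow, mul_pow, inv_pow, hsqrt, hsqrt, Complex.inv_I, mul_assoc]

/-- The period pair `(1, τ)`. -/
def unitPeriodPair (τ : ℍ) : PeriodPair where
  ω₁ := 1
  ω₂ := τ
  indep := LinearIndependent.pair_iff.2 fun s t h ↦ by
    have ht : t = 0 := by simpa [τ.im_pos.ne'] using congrArg Complex.im h
    exact ⟨by simpa [ht] using congrArg Complex.re h, ht⟩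

lemma coe_S_smul (τ : ℍ) : ((ModularGroup.S • τ : ℍ) : ℂ) = -1 / τ := by
  rw [UpperHalfPlane.modular_S_smul, neg_div, one_div, ← inv_neg]

/-- The theta quotient of `S • τ` at `z / τ`, made quasi-periodic for the lattice `ℤ + ℤτ` with
the factors of automorphy of `thetaQuotient z τ`. -/
def invertedTheta (τ : ℍ) (z : ℂ) : ℂ :=
  𝕖 (-z ^ 2 / (2 * τ)) * thetaQuotient (z / τ) (ModularGroup.S • τ : ℍ)

lemma differentiable_invertedTheta (τ : ℍ) : Differentiable ℂ (invertedTheta τ) := by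
  have := differentiable_expTwoPiI
  have := differentiable_thetaQuotient (ModularGroup.S • τ)
  unfold invertedTheta
  fun_prop

lemma invertedTheta_add_one (τ : ℍ) (z : ℂ) : invertedTheta τ (z + 1) = -invertedTheta τ z := by
  have hτ := τ.ne_zero
  have hquasi := thetaQuotient_add_self ((z + 1) / τ) (ModularGroup.S • τ)
  have hshift : (z + 1) / τ + (ModularGroup.S • τ : ℍ) = z / τ := by
    rw [coe_S_smul]
    ring
  have hexp : 𝕖 (-(z + 1) ^ 2 / (2 * τ)) =
      𝕖 (-z ^ 2 / (2 * τ)) * 𝕖 (-(ModularGroup.S • τ : ℍ) / 2 - (z + 1) / τ) := by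
    rw [← expTwoPiI_add, coe_S_smul]
    congr 1
    field_simp
    ring
  rw [hshift] at hquasi
  simp only [invertedTheta, hquasi, hexp]
  ring

lemma invertedTheta_add_self (τ : ℍ) (z : ℂ) :
    invertedTheta τ (z + τ) = -𝕖 (-τ / 2 - z) * invertedTheta τ z := by
  have hτ := τ.ne_zero
  have hexp : 𝕖 (-(z + τ) ^ 2 / (2 * τ)) = 𝕖 (-τ / 2 - z) * 𝕖 (-z ^ 2 / (2 * τ)) := by
    rw [← expTwoPiI_add]
    congr 1
    field_simp
    ring
  simp only [invertedTheta, add_div z, div_self hτ, thetaQuotient_add_one, hexp]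
  ring

lemma invertedTheta_eq_zero {z : ℂ} {τ : ℍ} (hz : thetaQuotient z τ = 0) :
    invertedTheta τ z = 0 := by
  have hτ := τ.ne_zero
  obtain ⟨k, l, rfl⟩ := thetaQuotient_eq_zero_iff.1 hz
  refine mul_eq_zero_of_right _ (thetaQuotient_eq_zero_iff.2 ⟨-l, k, ?_⟩)
  rw [coe_S_smul]
  push_cast
  field_simp
  ring

lemma hasDerivAt_invertedTheta_zero (τ : ℍ) :
    HasDerivAt (invertedTheta τ) (-Complex.I * (2 * π * Complex.I * ModularForm.eta τ ^ 2)) 0 := by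
  have hτ := τ.ne_zero
  have hexp : DifferentiableAt ℂ (fun z : ℂ ↦ 𝕖 (-z ^ 2 / (2 * τ))) 0 := by
    have := differentiable_expTwoPiI
    fun_prop
  have hscaled := (hasDerivAt_thetaQuotient_zero (ModularGroup.S • τ)).comp_of_eq (0 : ℂ)
    ((hasDerivAt_id (0 : ℂ)).div_const (τ : ℂ)) (zero_div _).symm
  refine (hexp.hasDerivAt.mul hscaled).congr_deriv ?_
  simp only [zero_div, thetaQuotient_zero, mul_zero, ne_eq, OfNat.ofNat_ne_zero,
    not_false_eq_true, zero_pow, neg_zero, expTwoPiI_zero, one_mul, zero_add, coe_S_smul,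
    eta_neg_inv_sq, Function.comp_apply, id]
  field_simp

lemma thetaQuotient_S_smul (z : ℂ) (τ : ℍ) :
    thetaQuotient (z / τ) (ModularGroup.S • τ : ℍ) =
      -Complex.I * 𝕖 (z ^ 2 / (2 * τ)) * thetaQuotient z τ := by
  obtain ⟨c, hc⟩ := exists_eq_const_mul_of_quasiPeriodic (unitPeriodPair τ) (j₁ := fun _ ↦ -1)
    (differentiable_thetaQuotient τ) (differentiable_invertedTheta τ)
    (fun _ ↦ deriv_thetaQuotient_ne_zero) (fun _ ↦ invertedTheta_eq_zero)
    (fun z ↦ (thetaQuotient_add_one z τ).trans (neg_one_mul _).symm)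
    (fun z ↦ (invertedTheta_add_one τ z).trans (neg_one_mul _).symm)
    (thetaQuotient_add_self · τ) (invertedTheta_add_self τ)
  have hconst : -Complex.I = c := by
    have hderiv := (hasDerivAt_thetaQuotient_zero τ).const_mul c
    rw [← funext hc] at hderiv
    exact mul_right_cancel₀ (mul_ne_zero Complex.two_pi_I_ne_zero
      (pow_ne_zero 2 (ModularForm.eta_ne_zero τ.2)))
      ((hasDerivAt_invertedTheta_zero τ).unique hderiv)
  rw [hconst, mul_right_comm, ← hc, invertedTheta, mul_right_comm, ← expTwoPiI_add, neg_div,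
    neg_add_cancel, expTwoPiI_zero, one_mul]

lemma thetaQuotient_add_one_right (z τ : ℂ) :
    thetaQuotient z (τ + 1) = 𝕖 (1 / 12) * thetaQuotient z τ := by
  have hperiodic : 𝕖 (τ + 1) = 𝕖 τ := by simpa using expTwoPiI_add_intCast τ 1
  simp only [thetaQuotient, hperiodic, add_div, expTwoPiI_add]
  ring

end ThetaQuotient

section SiegelTransformation

lemma siegel_eq_thetaQuotient (r : ℚ × ℚ) (τ : ℍ) :
    siegel r τ = 𝕖 (r.1 * (r.1 * τ + r.2) / 2) * thetaQuotient (r.1 * τ + r.2) τ := by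
  have hq := norm_expTwoPiI_lt_one τ
  set z : ℂ := r.1 * τ + r.2 with hz
  have hprod : ∏' n : ℕ, ((1 - 𝕖 ((n + 1 + r.1) * τ + r.2)) * (1 - 𝕖 ((n + 1 - r.1) * τ - r.2))) =
      eulerProd (𝕖 τ) (𝕖 z) * eulerProd (𝕖 τ) (𝕖 (-z)) := by
    rw [eulerProd, eulerProd,
      ← (multipliable_eulerProd hq _).tprod_mul (multipliable_eulerProd hq _)]
    refine tprod_congr fun n ↦ ?_
    rw [expTwoPiI_pow, ← expTwoPiI_add, ← expTwoPiI_add, hz]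
    push_cast
    ring_nf
  have hprefactor : Complex.exp (π * Complex.I * ((r.1 ^ 2 - r.1 + 1 / 6) * τ)) *
      Complex.exp (π * Complex.I * r.2 * (r.1 - 1)) =
      𝕖 (r.1 * z / 2) * 𝕖 (τ / 12) * 𝕖 (-z / 2) := by
    rw [← Complex.exp_add, ← expTwoPiI_add, ← expTwoPiI_add, expTwoPiI, hz]
    ring_nf
  have hhalf : 𝕖 (-z / 2) * 𝕖 z = 𝕖 (z / 2) := by rw [← expTwoPiI_add]; ring_nf
  have hdef (w : ℂ) : Complex.exp (2 * π * Complex.I * w) = 𝕖 w := rfl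
  simp only [siegel, ← hz, hdef, hprod, thetaQuotient]
  linear_combination (𝕖 z - 1) * eulerProd (𝕖 τ) (𝕖 z) * eulerProd (𝕖 τ) (𝕖 (-z)) * hprefactor +
    𝕖 (r.1 * z / 2) * 𝕖 (τ / 12) * eulerProd (𝕖 τ) (𝕖 z) * eulerProd (𝕖 τ) (𝕖 (-z)) * hhalf

lemma siegel_add_intCast (r : ℚ × ℚ) (k l : ℤ) (τ : ℍ) :
    siegel (r.1 + k, r.2 + l) τ =
      𝕖 ((k * l + k + l - k * r.2 + l * r.1) / 2) * siegel r τ := by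
  simp only [siegel_eq_thetaQuotient]
  push_cast
  rw [show (r.1 + k : ℂ) * τ + (r.2 + l) = (r.1 * τ + r.2) + (k * τ + l) by ring,
    thetaQuotient_add_lattice, ← mul_assoc, ← mul_assoc, ← expTwoPiI_add, ← expTwoPiI_add]
  ring_nf

lemma siegel_T_smul (r : ℚ × ℚ) (τ : ℍ) :
    siegel r (ModularGroup.T • τ) = 𝕖 ((1 : ℤ) / 12) * siegel (tAct ModularGroup.T r) τ := by
  have hcoe : ((ModularGroup.T • τ : ℍ) : ℂ) = τ + 1 := by
    rw [UpperHalfPlane.modular_T_smul, UpperHalfPlane.coe_vadd, Complex.ofReal_one, add_comm]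
  have htAct : tAct ModularGroup.T r = (r.1, r.1 + r.2) := by simp [tAct, ModularGroup.T]
  simp only [siegel_eq_thetaQuotient, hcoe, htAct]
  push_cast
  rw [show (r.1 : ℂ) * (τ + 1) + r.2 = r.1 * τ + (r.1 + r.2) by ring, thetaQuotient_add_one_right]
  ring

lemma siegel_S_smul (r : ℚ × ℚ) (τ : ℍ) :
    siegel r (ModularGroup.S • τ) = 𝕖 ((-3 : ℤ) / 12) * siegel (tAct ModularGroup.S r) τ := by
  have hτ := τ.ne_zero
  have htAct : tAct ModularGroup.S r = (r.2, -r.1) := by simp [tAct, ModularGroup.S]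
  have hz : (r.1 : ℂ) * (ModularGroup.S • τ : ℍ) + r.2 = (r.2 * τ - r.1) / τ := by
    rw [coe_S_smul]
    field_simp
    ring
  have hconst : 𝕖 ((-3 : ℤ) / 12) = -Complex.I := by
    rw [← expTwoPiI_neg_quarter]
    norm_num
  simp only [siegel_eq_thetaQuotient, hz, thetaQuotient_S_smul, htAct, hconst]
  push_cast
  rw [← sub_eq_add_neg]
  set z : ℂ := r.2 * τ - r.1 with hz
  have hexp : 𝕖 (r.1 * (z / τ) / 2) * 𝕖 (z ^ 2 / (2 * τ)) = 𝕖 (r.2 * z / 2) := by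
    rw [← expTwoPiI_add, hz]
    congr 1
    field_simp
    ring
  linear_combination -Complex.I * thetaQuotient z τ * hexp

lemma tAct_one (r : ℚ × ℚ) : tAct 1 r = r := by simp [tAct]

lemma tAct_mul (γ δ : SL(2, ℤ)) (r : ℚ × ℚ) : tAct (γ * δ) r = tAct δ (tAct γ r) := by
  simp only [tAct, Matrix.SpecialLinearGroup.coe_mul, Matrix.mul_apply, Fin.sum_univ_two]
  ext <;> (push_cast; ring)

end SiegelTransformation

/-- The polynomial whose value modulo `12` at the entries of `[[a, b], [c, d]] ∈ SL₂(ℤ)` is the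
exponent of the multiplier system of `η²`, as a twelfth root of unity. It merges Petersson's
separate formulas for odd and even `c`, so that it makes sense modulo `3` and modulo `4`. -/
def etaSqPolynomial {R : Type*} [CommRing R] (a b c d : R) : R :=
  (1 - c ^ 2) * (b * d + 3 * (c - 1) * d + c + 3) + c * (a + d - 3)

/-- An integer representing modulo `12` the exponent of the multiplier system of `η²` at `γ`. -/
def etaSqExponent (γ : SL(2, ℤ)) : ℤ := etaSqPolynomial (γ 0 0) (γ 0 1) (γ 1 0) (γ 1 1)

section EtaMultiplier

lemma etaSqPolynomial_intCast {R : Type*} [CommRing R] (a b c d : ℤ) :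
    ((etaSqPolynomial a b c d : ℤ) : R) = etaSqPolynomial (a : R) b c d := by
  simp [etaSqPolynomial]

lemma twelve_dvd_iff (x : ℤ) : 12 ∣ x ↔ (x : ZMod 3) = 0 ∧ (x : ZMod 4) = 0 := by
  simp only [ZMod.intCast_zmod_eq_zero_iff_dvd]
  push_cast
  omega

lemma twelve_dvd_etaSqPolynomial_T {a b c d : ℤ} (hdet : a * d - b * c = 1) :
    12 ∣ etaSqPolynomial (a + c) (b + d) c d - (etaSqPolynomial a b c d + 1) := by
  have hthree : ∀ a b c d : ZMod 3, a * d - b * c = 1 →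
      etaSqPolynomial (a + c) (b + d) c d - (etaSqPolynomial a b c d + 1) = 0 := by
    unfold etaSqPolynomial; decide
  have hfour : ∀ a b c d : ZMod 4, a * d - b * c = 1 →
      etaSqPolynomial (a + c) (b + d) c d - (etaSqPolynomial a b c d + 1) = 0 := by
    unfold etaSqPolynomial; decide
  rw [twelve_dvd_iff]
  push_cast [etaSqPolynomial_intCast]
  exact ⟨hthree a b c d (mod_cast congrArg (Int.cast : ℤ → ZMod 3) hdet),
    hfour a b c d (mod_cast congrArg (Int.cast : ℤ → ZMod 4) hdet)⟩

lemma twelve_dvd_etaSqPolynomial_S {a b c d : ℤ} (hdet : a * d - b * c = 1) :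
    12 ∣ etaSqPolynomial (-c) (-d) a b - (etaSqPolynomial a b c d + -3) := by
  have hthree : ∀ a b c d : ZMod 3, a * d - b * c = 1 →
      etaSqPolynomial (-c) (-d) a b - (etaSqPolynomial a b c d + -3) = 0 := by
    unfold etaSqPolynomial; decide
  have hfour : ∀ a b c d : ZMod 4, a * d - b * c = 1 →
      etaSqPolynomial (-c) (-d) a b - (etaSqPolynomial a b c d + -3) = 0 := by
    unfold etaSqPolynomial; decide
  rw [twelve_dvd_iff]
  push_cast [etaSqPolynomial_intCast]
  exact ⟨hthree a b c d (mod_cast congrArg (Int.cast : ℤ → ZMod 3) hdet),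
    hfour a b c d (mod_cast congrArg (Int.cast : ℤ → ZMod 4) hdet)⟩

lemma det_eq_one (γ : SL(2, ℤ)) : γ 0 0 * γ 1 1 - γ 0 1 * γ 1 0 = 1 := by
  rw [← Matrix.det_fin_two, γ.det_coe]

lemma twelve_dvd_etaSqExponent_T_mul (γ : SL(2, ℤ)) :
    12 ∣ etaSqExponent (ModularGroup.T * γ) - (etaSqExponent γ + 1) := by
  simpa [etaSqExponent, ModularGroup.coe_T, Matrix.mul_apply, Fin.sum_univ_two] using
    twelve_dvd_etaSqPolynomial_T (det_eq_one γ)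

lemma twelve_dvd_etaSqExponent_S_mul (γ : SL(2, ℤ)) :
    12 ∣ etaSqExponent (ModularGroup.S * γ) - (etaSqExponent γ + -3) := by
  simpa [etaSqExponent, ModularGroup.coe_S, Matrix.mul_apply, Fin.sum_univ_two] using
    twelve_dvd_etaSqPolynomial_S (det_eq_one γ)

lemma expTwoPiI_div_twelve_eq {k l : ℤ} (h : 12 ∣ k - l) : 𝕖 (k / 12) = 𝕖 (l / 12) := by
  obtain ⟨n, hn⟩ := h
  obtain rfl : k = l + 12 * n := by lia
  rw [← expTwoPiI_add_intCast (l / 12) n]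
  push_cast
  ring_nf

lemma siegel_smul_mul_iff {s γ : SL(2, ℤ)} {k l n : ℤ}
    (hs : ∀ r τ, siegel r (s • τ) = 𝕖 (k / 12) * siegel (tAct s r) τ) (hn : 12 ∣ n - (l + k)) :
    (∀ r τ, siegel r ((s * γ) • τ) = 𝕖 (n / 12) * siegel (tAct (s * γ) r) τ) ↔
      ∀ r τ, siegel r (γ • τ) = 𝕖 (l / 12) * siegel (tAct γ r) τ := by
  have hstep (r : ℚ × ℚ) (τ : ℍ) :
      siegel r ((s * γ) • τ) = 𝕖 (n / 12) * siegel (tAct (s * γ) r) τ ↔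
        siegel (tAct s r) (γ • τ) = 𝕖 (l / 12) * siegel (tAct γ (tAct s r)) τ := by
    rw [mul_smul, hs, tAct_mul, expTwoPiI_div_twelve_eq hn, Int.cast_add, add_comm (l : ℂ), add_div,
      expTwoPiI_add, mul_assoc, mul_right_inj' (expTwoPiI_ne_zero _)]
  refine ⟨fun h r τ ↦ ?_, fun h r τ ↦ (hstep r τ).2 (h _ τ)⟩
  have hsurj : tAct s (tAct s⁻¹ r) = r := by rw [← tAct_mul, inv_mul_cancel, tAct_one]
  simpa only [hsurj] using (hstep (tAct s⁻¹ r) τ).1 (h _ τ)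

theorem siegel_smul (γ : SL(2, ℤ)) :
    ∀ (r : ℚ × ℚ) (τ : ℍ), siegel r (γ • τ) = 𝕖 (etaSqExponent γ / 12) * siegel (tAct γ r) τ := by
  have hS (γ : SL(2, ℤ)) :=
    siegel_smul_mul_iff (γ := γ) siegel_S_smul (twelve_dvd_etaSqExponent_S_mul γ)
  have hT (γ : SL(2, ℤ)) :=
    siegel_smul_mul_iff (γ := γ) siegel_T_smul (twelve_dvd_etaSqExponent_T_mul γ)
  have hγ : γ ∈ Subgroup.closure {ModularGroup.S, ModularGroup.T} := by
    simp [SpecialLinearGroup.SL2Z_generators]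
  induction hγ using Subgroup.closure_induction_left with
  | one =>
    have hone : etaSqExponent 1 = 0 := by simp [etaSqExponent, etaSqPolynomial]
    simp [hone, tAct_one, expTwoPiI_zero]
  | mul_left s hs γ _ ih =>
    obtain rfl | rfl := hs
    exacts [(hS γ).2 ih, (hT γ).2 ih]
  | inv_mul_cancel s hs γ _ ih =>
    obtain rfl | rfl := hs
    · exact (hS _).1 (by rwa [mul_inv_cancel_left])
    · exact (hT _).1 (by rwa [mul_inv_cancel_left])

lemma dvd_etaSqExponent {N : ℕ} {γ : SL(2, ℤ)} (hγ : γ ∈ CongruenceSubgroup.Gamma N) :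
    (N : ℤ) ∣ etaSqExponent γ := by
  obtain ⟨ha, hb, hc, hd⟩ := Gamma_mem.1 hγ
  rw [← ZMod.intCast_zmod_eq_zero_iff_dvd, etaSqExponent, etaSqPolynomial_intCast, ha, hb, hc, hd,
    etaSqPolynomial]
  ring

end EtaMultiplier

/-- The quadratic relations modulo `N` of Kubert and Lang, for the family of vectors
`(x i / N, y i / N)` taken with multiplicities `m i`. -/
structure QuadraticRelations {ι : Type*} (N : ℕ) (S : Finset ι) (m x y : ι → ℤ) : Prop where
  dvd_sum_sq_left : (Nat.gcd 2 N * N : ℤ) ∣ ∑ i ∈ S, m i * x i ^ 2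
  dvd_sum_sq_right : (Nat.gcd 2 N * N : ℤ) ∣ ∑ i ∈ S, m i * y i ^ 2
  dvd_sum_mul : (N : ℤ) ∣ ∑ i ∈ S, m i * (x i * y i)

/-- `2 N` times the exponent of the root of unity by which the Siegel function of index
`(x / N, y / N)` is multiplied when its index is translated by `(k, l)`. -/
def translationExponent (N : ℕ) (x y k l : ℤ) : ℤ := N * (k * l + k + l) + (l * x - k * y)

section QuadraticRelations

variable {ι : Type*} {N : ℕ} {S : Finset ι} {m x y : ι → ℤ}

lemma two_mul_dvd_mul_of_gcd_two_mul_dvd {c Q : ℤ} (hc : Odd (N : ℤ) → Even c)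
    (hQ : (Nat.gcd 2 N * N : ℤ) ∣ Q) : 2 * (N : ℤ) ∣ c * Q := by
  rcases Nat.even_or_odd N with hN | hN
  · rw [Nat.gcd_eq_left hN.two_dvd] at hQ
    exact hQ.mul_left c
  · rw [Nat.coprime_two_left.2 hN, Nat.cast_one, one_mul] at hQ
    exact mul_dvd_mul (hc ((Int.odd_coe_nat N).2 hN)).two_dvd hQ

lemma two_mul_dvd_mul_sum_sq_sub_sum (N : ℕ) (S : Finset ι) (m x : ι → ℤ) :
    2 * (N : ℤ) ∣ N * (∑ i ∈ S, m i * x i - ∑ i ∈ S, m i * x i ^ 2) := by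
  rw [mul_comm]
  refine mul_dvd_mul_left _ ?_
  rw [← Finset.sum_sub_distrib]
  refine Finset.dvd_sum fun i _ ↦ ?_
  rw [← mul_sub, show x i - x i ^ 2 = -(x i * (x i - 1)) by ring]
  exact ((Int.even_mul_pred_self _).two_dvd.neg_right).mul_left _

lemma sum_translationExponent (a b c d : ℤ) :
    ∑ i ∈ S, m i * translationExponent N (x i) (y i) (a * x i + c * y i) (b * x i + d * y i) =
      (N * (a * b + a + b) + b) * ∑ i ∈ S, m i * x i ^ 2 +
      (N * (c * d + c + d) - c) * ∑ i ∈ S, m i * y i ^ 2 +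
      (N * (a * d + b * c) + (d - a)) * ∑ i ∈ S, m i * (x i * y i) +
      (a + b) * (N * (∑ i ∈ S, m i * x i - ∑ i ∈ S, m i * x i ^ 2)) +
      (c + d) * (N * (∑ i ∈ S, m i * y i - ∑ i ∈ S, m i * y i ^ 2)) := by
  simp only [translationExponent, Finset.mul_sum, ← Finset.sum_add_distrib,
    ← Finset.sum_sub_distrib]
  exact Finset.sum_congr rfl fun i _ ↦ by ring

lemma even_sum_translationExponent_coeff {a b c d n : ℤ}
    (hdet : a + d + n * (a * d - b * c) = 0) :
    (Odd n → Even (n * (a * b + a + b) + b)) ∧ (Odd n → Even (n * (c * d + c + d) - c)) ∧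
      Even (n * (a * d + b * c) + (d - a)) := by
  have hmod : ∀ a b c d n : ZMod 2, a + d + n * (a * d - b * c) = 0 →
      (n = 1 → n * (a * b + a + b) + b = 0) ∧ (n = 1 → n * (c * d + c + d) - c = 0) ∧
        n * (a * d + b * c) + (d - a) = 0 := by
    decide
  simp only [← ZMod.intCast_eq_zero_iff_even, ← ZMod.intCast_eq_one_iff_odd]
  push_cast
  exact hmod _ _ _ _ _ (mod_cast congrArg (Int.cast : ℤ → ZMod 2) hdet)

lemma QuadraticRelations.two_mul_dvd_sum_translationExponent
    (h : QuadraticRelations N S m x y) {a b c d : ℤ} (hdet : a + d + N * (a * d - b * c) = 0) :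
    2 * (N : ℤ) ∣ ∑ i ∈ S, m i *
      translationExponent N (x i) (y i) (a * x i + c * y i) (b * x i + d * y i) := by
  obtain ⟨hsq_left, hsq_right, hmul⟩ := even_sum_translationExponent_coeff hdet
  rw [sum_translationExponent]
  refine ((((two_mul_dvd_mul_of_gcd_two_mul_dvd hsq_left h.dvd_sum_sq_left).add
    (two_mul_dvd_mul_of_gcd_two_mul_dvd hsq_right h.dvd_sum_sq_right)).add
    (mul_dvd_mul hmul.two_dvd h.dvd_sum_mul)).add ?_).add ?_
  all_goals exact (two_mul_dvd_mul_sum_sq_sub_sum N S m _).mul_left _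

end QuadraticRelations

section Invariance

variable {N : ℕ} {γ : SL(2, ℤ)}

lemma exists_entries_of_mem_Gamma (hN : N ≠ 0) (hγ : γ ∈ CongruenceSubgroup.Gamma N) :
    ∃ a b c d : ℤ, (γ 0 0 = 1 + N * a ∧ γ 0 1 = N * b ∧ γ 1 0 = N * c ∧ γ 1 1 = 1 + N * d) ∧
      a + d + N * (a * d - b * c) = 0 := by
  obtain ⟨h₀₀, h₀₁, h₁₀, h₁₁⟩ := Gamma_mem.1 hγ
  obtain ⟨a, ha⟩ := (ZMod.intCast_eq_intCast_iff_dvd_sub 1 (γ 0 0) N).1 (by simp [h₀₀])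
  obtain ⟨b, hb⟩ := (ZMod.intCast_zmod_eq_zero_iff_dvd _ _).1 h₀₁
  obtain ⟨c, hc⟩ := (ZMod.intCast_zmod_eq_zero_iff_dvd _ _).1 h₁₀
  obtain ⟨d, hd⟩ := (ZMod.intCast_eq_intCast_iff_dvd_sub 1 (γ 1 1) N).1 (by simp [h₁₁])
  rw [sub_eq_iff_eq_add'] at ha hd
  refine ⟨a, b, c, d, ⟨ha, hb, hc, hd⟩, mul_left_cancel₀ (Nat.cast_ne_zero.2 hN) ?_⟩
  have hdet := det_eq_one γ
  rw [ha, hb, hc, hd] at hdet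
  linear_combination hdet

lemma siegel_smul_of_entries (hN : N ≠ 0) {a b c d : ℤ}
    (hγ : γ 0 0 = 1 + N * a ∧ γ 0 1 = N * b ∧ γ 1 0 = N * c ∧ γ 1 1 = 1 + N * d)
    (x y : ℤ) (τ : ℍ) :
    siegel (x / N, y / N) (γ • τ) = 𝕖 (etaSqExponent γ / 12 +
      translationExponent N x y (a * x + c * y) (b * x + d * y) / (2 * N)) *
      siegel (x / N, y / N) τ := by
  have hN' : (N : ℂ) ≠ 0 := Nat.cast_ne_zero.2 hN
  have htAct : tAct γ (x / N, y / N) =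
      ((x / N : ℚ) + (a * x + c * y : ℤ), (y / N : ℚ) + (b * x + d * y : ℤ)) := by
    simp only [tAct, hγ]
    push_cast
    ext <;> (field_simp; ring)
  rw [siegel_smul, htAct, siegel_add_intCast (x / N, y / N), ← mul_assoc, ← expTwoPiI_add,
    translationExponent]
  congr 3
  push_cast
  field_simp
  ring

theorem QuadraticRelations.prod_siegel_smul {ι : Type*} {S : Finset ι} {m x y : ι → ℤ}
    (h : QuadraticRelations N S m x y) (hm : (12 : ℤ) ∣ (∑ i ∈ S, m i) * (Nat.gcd 12 N : ℤ))
    (hN : N ≠ 0) (hγ : γ ∈ CongruenceSubgroup.Gamma N) (τ : ℍ) :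
    ∏ i ∈ S, siegel (x i / N, y i / N) (γ • τ) ^ m i =
      ∏ i ∈ S, siegel (x i / N, y i / N) τ ^ m i := by
  have hN' : (N : ℂ) ≠ 0 := Nat.cast_ne_zero.2 hN
  obtain ⟨a, b, c, d, hentries, hdet⟩ := exists_entries_of_mem_Gamma hN hγ
  obtain ⟨k, hk⟩ : 12 ∣ (∑ i ∈ S, m i) * etaSqExponent γ :=
    hm.trans (mul_dvd_mul_left _
      ((Int.natCast_dvd_natCast.2 (Nat.gcd_dvd_right 12 N)).trans (dvd_etaSqExponent hγ)))
  obtain ⟨l, hl⟩ := h.two_mul_dvd_sum_translationExponent hdet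
  set e : ι → ℤ :=
    fun i ↦ translationExponent N (x i) (y i) (a * x i + c * y i) (b * x i + d * y i)
  have hexponent : ∑ i ∈ S, m i * (etaSqExponent γ / 12 + e i / (2 * N) : ℂ) = (k + l : ℤ) := by
    have hk' := congrArg (Int.cast : ℤ → ℂ) hk
    have hl' := congrArg (Int.cast : ℤ → ℂ) hl
    push_cast at hk' hl' ⊢
    simp only [mul_add, Finset.sum_add_distrib, ← mul_div_assoc, ← Finset.sum_div, ← Finset.sum_mul]
    rw [hk', hl']
    field_simp
  simp only [siegel_smul_of_entries hN hentries, mul_zpow, Finset.prod_mul_distrib]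
  simp only [expTwoPiI_zpow]
  rw [← expTwoPiI_sum, hexponent, expTwoPiI_intCast, one_mul]

end Invariance

/-- The ring of functions holomorphic on the unit disc (and arbitrary outside of it) whose Taylor
coefficients at `0` all lie in the field `K`. -/
def taylorSubring (K : Subfield ℂ) : Subring (ℂ → ℂ) where
  carrier := {F | DifferentiableOn ℂ F (Metric.ball 0 1) ∧ ∀ n, iteratedDeriv n F 0 ∈ K}
  one_mem' := ⟨differentiableOn_const 1, fun n ↦ by
    rw [Pi.one_def, iteratedDeriv_const]
    split_ifs
    exacts [one_mem K, zero_mem K]⟩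
  zero_mem' := ⟨differentiableOn_const 0, fun n ↦ by
    rw [Pi.zero_def, iteratedDeriv_const]
    split_ifs <;> exact zero_mem K⟩
  add_mem' {F G} hF hG := ⟨hF.1.add hG.1, fun n ↦ by
    rw [iteratedDeriv_add (hF.1.analyticAt (Metric.ball_mem_nhds 0 one_pos)).contDiffAt
      (hG.1.analyticAt (Metric.ball_mem_nhds 0 one_pos)).contDiffAt]
    exact add_mem (hF.2 n) (hG.2 n)⟩
  mul_mem' {F G} hF hG := ⟨hF.1.mul hG.1, fun n ↦ by
    rw [iteratedDeriv_mul (hF.1.analyticAt (Metric.ball_mem_nhds 0 one_pos)).contDiffAt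
      (hG.1.analyticAt (Metric.ball_mem_nhds 0 one_pos)).contDiffAt]
    exact sum_mem fun i _ ↦ mul_mem (mul_mem (natCast_mem K _) (hF.2 i)) (hG.2 _)⟩
  neg_mem' {F} hF := ⟨hF.1.neg, fun n ↦ by
    rw [iteratedDeriv_neg]
    exact neg_mem (hF.2 n)⟩

section TaylorSubring

variable {K : Subfield ℂ} {F : ℂ → ℂ}

lemma contDiffAt_zero_of_mem_taylorSubring (hF : F ∈ taylorSubring K) (n : ℕ) :
    ContDiffAt ℂ n F 0 :=
  (hF.1.analyticAt (Metric.ball_mem_nhds 0 one_pos)).contDiffAt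

lemma const_mem_taylorSubring {c : ℂ} (hc : c ∈ K) : Function.const ℂ c ∈ taylorSubring K := by
  refine ⟨differentiableOn_const c, fun n ↦ ?_⟩
  change iteratedDeriv n (fun _ ↦ c) 0 ∈ K
  rw [iteratedDeriv_const]
  split_ifs
  exacts [hc, zero_mem K]

lemma id_mem_taylorSubring : id ∈ taylorSubring K := by
  refine ⟨differentiableOn_id, fun n ↦ ?_⟩
  have h := iteratedDeriv_fun_pow_zero (𝕜 := ℂ) (n := n) (m := 1)
  simp only [pow_one] at h
  change iteratedDeriv n (fun x ↦ x) 0 ∈ K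
  exact h ▸ natCast_mem K _

lemma inv_mem_taylorSubring (hF : F ∈ taylorSubring K) (hne : ∀ x ∈ Metric.ball 0 1, F x ≠ 0) :
    F⁻¹ ∈ taylorSubring K := by
  have hdiff : DifferentiableOn ℂ F⁻¹ (Metric.ball 0 1) := hF.1.inv hne
  have hmul : F * F⁻¹ =ᶠ[nhds 0] 1 := by
    filter_upwards [Metric.ball_mem_nhds 0 one_pos] with x hx using mul_inv_cancel₀ (hne x hx)
  refine ⟨hdiff, fun n ↦ ?_⟩
  induction n using Nat.strong_induction_on with
  | _ n ih =>
    have hleibniz := iteratedDeriv_mul (contDiffAt_zero_of_mem_taylorSubring hF n)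
      (hdiff.analyticAt (Metric.ball_mem_nhds 0 one_pos)).contDiffAt
    have hone : iteratedDeriv n (F * F⁻¹) 0 ∈ K :=
      hmul.iteratedDeriv_eq n ▸ (one_mem (taylorSubring K)).2 n
    rw [Finset.sum_range_succ'] at hleibniz
    have hlower : ∑ i ∈ Finset.range n, ((n.choose (i + 1) : ℕ) : ℂ) * iteratedDeriv (i + 1) F 0 *
        iteratedDeriv (n - (i + 1)) F⁻¹ 0 ∈ K :=
      sum_mem fun i hi ↦ mul_mem (mul_mem (natCast_mem K _) (hF.2 _))
        (ih _ (by have := Finset.mem_range.1 hi; lia))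
    have htop : F 0 * iteratedDeriv n F⁻¹ 0 ∈ K := by
      simpa [hleibniz] using sub_mem hone hlower
    rw [← inv_mul_cancel_left₀ (hne 0 (Metric.mem_ball_self one_pos)) (iteratedDeriv n F⁻¹ 0)]
    exact mul_mem (inv_mem (hF.2 0)) htop

lemma zpow_mem_taylorSubring (hF : F ∈ taylorSubring K) (hne : ∀ x ∈ Metric.ball 0 1, F x ≠ 0)
    (k : ℤ) : F ^ k ∈ taylorSubring K := by
  cases k with
  | ofNat k => simpa using pow_mem hF k
  | negSucc k =>
    rw [zpow_negSucc]
    exact inv_mem_taylorSubring (pow_mem hF _) fun x hx ↦ pow_ne_zero _ (hne x hx)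

lemma tendstoLocallyUniformlyOn_iteratedDeriv {f : ℕ → ℂ → ℂ} {U : Set ℂ} (hU : IsOpen U)
    (hf : ∀ n, DifferentiableOn ℂ (f n) U)
    (hlim : TendstoLocallyUniformlyOn f F Filter.atTop U) (k : ℕ) :
    TendstoLocallyUniformlyOn (fun n ↦ iteratedDeriv k (f n)) (iteratedDeriv k F)
      Filter.atTop U := by
  have hdiff (k n : ℕ) : DifferentiableOn ℂ (iteratedDeriv k (f n)) U := by
    induction k with
    | zero => simpa only [iteratedDeriv_zero] using hf n
    | succ k ih => simpa only [iteratedDeriv_succ] using ih.deriv hU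
  induction k with
  | zero => simpa only [iteratedDeriv_zero] using hlim
  | succ k ih =>
    simp only [iteratedDeriv_succ]
    exact ih.deriv (.of_forall (hdiff k)) hU

lemma mem_taylorSubring_of_tendstoLocallyUniformlyOn {f : ℕ → ℂ → ℂ}
    (hf : ∀ n, f n ∈ taylorSubring K)
    (hlim : TendstoLocallyUniformlyOn f F Filter.atTop (Metric.ball 0 1))
    (hstable : ∀ n, ∀ k ≤ n, iteratedDeriv k (f (n + 1)) 0 = iteratedDeriv k (f n) 0) :
    F ∈ taylorSubring K := by
  refine ⟨hlim.differentiableOn (.of_forall fun n ↦ (hf n).1) Metric.isOpen_ball, fun k ↦ ?_⟩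
  have hconst (n : ℕ) (hn : k ≤ n) : iteratedDeriv k (f n) 0 = iteratedDeriv k (f k) 0 := by
    induction n, hn using Nat.le_induction with
    | base => rfl
    | succ n hn ih => rw [hstable n k hn, ih]
  have hlimit := (tendstoLocallyUniformlyOn_iteratedDeriv Metric.isOpen_ball (fun n ↦ (hf n).1)
    hlim k).tendsto_at (Metric.mem_ball_self one_pos)
  rw [← tendsto_nhds_unique (tendsto_atTop_of_eventually_const hconst) hlimit]
  exact (hf k).2 k

lemma iteratedDeriv_pow_mul_zero {k e : ℕ} (hke : k < e) (hF : F ∈ taylorSubring K) :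
    iteratedDeriv k (id ^ e * F) 0 = 0 := by
  have hcont : ContDiffAt ℂ k (id ^ e : ℂ → ℂ) 0 := contDiffAt_id.pow e
  rw [iteratedDeriv_mul hcont (contDiffAt_zero_of_mem_taylorSubring hF k)]
  refine Finset.sum_eq_zero fun i hi ↦ ?_
  have hpow : iteratedDeriv i (id ^ e : ℂ → ℂ) 0 = 0 := by
    change iteratedDeriv i (fun x : ℂ ↦ x ^ e) 0 = 0
    rw [iteratedDeriv_fun_pow_zero, if_neg (by have := Finset.mem_range.1 hi; lia), Nat.cast_zero]
  rw [hpow, mul_zero, zero_mul]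

lemma tendstoLocallyUniformlyOn_eulerProd_pow {N : ℕ} (hN : N ≠ 0) (α : ℂ) (b : ℕ) :
    TendstoLocallyUniformlyOn
      (fun n x ↦ ∏ i ∈ Finset.range n, (1 - (x ^ N) ^ (i + 1) * (α * x ^ b)))
      (fun x ↦ eulerProd (x ^ N) (α * x ^ b)) Filter.atTop (Metric.ball 0 1) := by
  have hprod : HasProdLocallyUniformlyOn
      (fun (n : ℕ) (x : ℂ) ↦ 1 + -((x ^ N) ^ (n + 1) * (α * x ^ b)))
      (fun x ↦ ∏' n : ℕ, (1 + -((x ^ N) ^ (n + 1) * (α * x ^ b)))) (Metric.ball 0 1) := by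
    refine hasProdLocallyUniformlyOn_of_forall_compact Metric.isOpen_ball fun Q hQ hcompact ↦ ?_
    obtain ⟨R, hR, hQR⟩ := exists_pos_lt_subset_ball one_pos hcompact.isClosed hQ
    refine (((summable_nat_add_iff 1).2
      (summable_geometric_of_lt_one hR.1.le hR.2)).mul_right ‖α‖).hasProdUniformlyOn_nat_one_add
      hcompact (.of_forall fun n x hx ↦ ?_) fun _ ↦ by fun_prop
    have hxR : ‖x‖ ≤ R := (mem_ball_zero_iff.1 (hQR hx)).le
    have hx1 : ‖x‖ ≤ 1 := hxR.trans hR.2.le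
    rw [norm_neg, norm_mul, norm_mul, norm_pow, norm_pow, norm_pow]
    calc (‖x‖ ^ N) ^ (n + 1) * (‖α‖ * ‖x‖ ^ b) ≤ R ^ (n + 1) * (‖α‖ * 1) := by
          gcongr
          · exact pow_nonneg hR.1.le _
          · exact (pow_le_of_le_one (norm_nonneg x) hx1 hN).trans hxR
          · exact pow_le_one₀ (norm_nonneg x) hx1
      _ = R ^ (n + 1) * ‖α‖ := by rw [mul_one]
  simpa only [eulerProd, sub_eq_add_neg] using hprod.tendstoLocallyUniformlyOn_finsetRange

lemma one_sub_mem_taylorSubring {α : ℂ} (hα : α ∈ K) (e : ℕ) :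
    (fun x ↦ 1 - α * x ^ e) ∈ taylorSubring K :=
  sub_mem (one_mem _) (mul_mem (const_mem_taylorSubring hα) (pow_mem id_mem_taylorSubring e))

lemma eulerProd_pow_mem_taylorSubring {N : ℕ} (hN : N ≠ 0) {α : ℂ} (hα : α ∈ K) (b : ℕ) :
    (fun x ↦ eulerProd (x ^ N) (α * x ^ b)) ∈ taylorSubring K := by
  set f : ℕ → ℂ → ℂ := fun n x ↦ ∏ i ∈ Finset.range n, (1 - (x ^ N) ^ (i + 1) * (α * x ^ b))
  have hsucc (n : ℕ) :
      f (n + 1) = f n - id ^ (N * (n + 1) + b) * (Function.const ℂ α * f n) := by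
    ext x
    simp only [f, Finset.prod_range_succ, Pi.sub_apply, Pi.mul_apply, Pi.pow_apply, id_eq,
      Function.const_apply]
    ring
  have hmem (n : ℕ) : f n ∈ taylorSubring K := by
    induction n with
    | zero => exact one_mem _
    | succ n ih =>
      exact hsucc n ▸ sub_mem ih
        (mul_mem (pow_mem id_mem_taylorSubring _) (mul_mem (const_mem_taylorSubring hα) ih))
  refine mem_taylorSubring_of_tendstoLocallyUniformlyOn hmem
    (tendstoLocallyUniformlyOn_eulerProd_pow hN α b) fun n k hk ↦ ?_
  have hfactor := mul_mem (const_mem_taylorSubring hα) (hmem n)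
  have horder : k < N * (n + 1) + b := by nlinarith [Nat.pos_of_ne_zero hN]
  rw [hsucc, iteratedDeriv_sub (contDiffAt_zero_of_mem_taylorSubring (hmem n) k)
    (contDiffAt_zero_of_mem_taylorSubring (mul_mem (pow_mem id_mem_taylorSubring _) hfactor) k),
    iteratedDeriv_pow_mul_zero horder hfactor, sub_zero]

end TaylorSubring

/-- The Siegel function of index `r` without the constant factor of its product expansion, so that
the leading coefficient of its `q`-expansion is `-1` if `0 < r.1 < 1`. -/
def normalizedSiegel (r : ℚ × ℚ) (τ : ℍ) : ℂ := 𝕖 (r.2 * (1 - r.1) / 2) * siegel r τ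

/-- The order at `∞` of the Siegel function of index `(x / N, y / N)` with respect to the local
parameter `q ^ (1 / N)`. It equals `N B₂(⟨x / N⟩) / 2`, where `⟨t⟩` is the fractional part
of `t`. -/
def siegelOrder (N : ℕ) (x : ℤ) : ℚ :=
  (((x % N : ℤ) : ℚ) ^ 2 - N * ((x % N : ℤ) : ℚ)) / (2 * N) + N / 12

section Expansion

lemma normalizedSiegel_eq (r : ℚ × ℚ) (τ : ℍ) {z : ℂ} (hz : z = r.1 * τ + r.2) :
    normalizedSiegel r τ = 𝕖 ((r.1 ^ 2 - r.1 + 1 / 6) / 2 * τ) *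
      -((1 - 𝕖 z) * eulerProd (𝕖 τ) (𝕖 z) *
        ((1 - 𝕖 (τ - z)) * eulerProd (𝕖 τ) (𝕖 (τ - z)))) := by
  have hshift : 𝕖 τ * 𝕖 (-z) = 𝕖 (τ - z) := by rw [← expTwoPiI_add, sub_eq_add_neg]
  have hhalf : 𝕖 (z / 2) - 𝕖 (-z / 2) = -𝕖 (-z / 2) * (1 - 𝕖 z) := by
    rw [show z / 2 = -z / 2 + z by ring, expTwoPiI_add]
    ring
  have hexp : 𝕖 ((r.1 ^ 2 - r.1 + 1 / 6) / 2 * τ) =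
      𝕖 (r.2 * (1 - r.1) / 2) * 𝕖 (r.1 * z / 2) * 𝕖 (τ / 12) * 𝕖 (-z / 2) := by
    simp only [← expTwoPiI_add]
    congr 1
    rw [hz]
    ring
  rw [normalizedSiegel, siegel_eq_thetaQuotient, ← hz, thetaQuotient, hhalf,
    eulerProd_eq_one_sub_mul (norm_expTwoPiI_lt_one τ) (𝕖 (-z)), hshift, hexp]
  ring

lemma normalizedSiegel_add_intCast (r : ℚ × ℚ) (k : ℤ) (τ : ℍ) :
    normalizedSiegel (r.1 + k, r.2) τ = 𝕖 (1 / 2) ^ k * 𝕖 (-k * r.2) * normalizedSiegel r τ := by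
  have hsiegel := siegel_add_intCast r k 0 τ
  rw [Int.cast_zero, add_zero] at hsiegel
  rw [normalizedSiegel, normalizedSiegel, hsiegel, expTwoPiI_zpow, ← mul_assoc, ← mul_assoc]
  simp only [← expTwoPiI_add]
  congr 2
  push_cast
  ring

variable {N : ℕ} {K : Subfield ℂ}

lemma one_sub_mul_eulerProd_pow_ne_zero (hN : N ≠ 0) {α w : ℂ} {a : ℕ} (hα : ‖α‖ = 1)
    (hne : a = 0 → α ≠ 1) (hw : ‖w‖ < 1) :
    (1 - α * w ^ a) * eulerProd (w ^ N) (α * w ^ a) ≠ 0 := by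
  have hwN : ‖w ^ N‖ < 1 := norm_pow w N ▸ pow_lt_one₀ (norm_nonneg w) hw hN
  have hwa : ‖α * w ^ a‖ ≤ 1 := by
    rw [norm_mul, hα, one_mul, norm_pow]
    exact pow_le_one₀ (norm_nonneg w) hw.le
  refine mul_ne_zero (sub_ne_zero.2 fun h ↦ ?_) (eulerProd_ne_zero hwN fun n h ↦ ?_)
  · rcases eq_or_ne a 0 with rfl | ha
    · exact hne rfl (by simpa using h.symm)
    · have hlt : ‖α * w ^ a‖ < 1 := by
        rw [norm_mul, hα, one_mul, norm_pow]
        exact pow_lt_one₀ (norm_nonneg w) hw ha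
      exact hlt.ne (h ▸ norm_one)
  · have hlt : ‖(w ^ N) ^ (n + 1) * (α * w ^ a)‖ < 1 := by
      rw [norm_mul, norm_pow]
      exact mul_lt_one_of_nonneg_of_lt_one_left (by positivity)
        (pow_lt_one₀ (norm_nonneg _) hwN n.succ_ne_zero) hwa
    exact hlt.ne (h ▸ norm_one)

lemma expTwoPiI_intCast_div_mem (hζ : 𝕖 (1 / N) ∈ K) (k : ℤ) : 𝕖 (k / N) ∈ K := by
  rw [show (k / N : ℂ) = k * (1 / N) by ring, ← expTwoPiI_zpow]
  exact zpow_mem hζ k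

lemma norm_expTwoPiI_intCast_div (k : ℤ) : ‖𝕖 (k / N)‖ = 1 := by
  rw [expTwoPiI, show 2 * π * Complex.I * (k / N) = ((2 * π * (k / N) : ℝ) : ℂ) * Complex.I by
    push_cast; ring, Complex.norm_exp_ofReal_mul_I]

lemma expTwoPiI_intCast_div_ne_one (hN : N ≠ 0) {k : ℤ} (hk : ¬ (N : ℤ) ∣ k) :
    𝕖 (k / N) ≠ 1 := by
  rw [Ne, expTwoPiI_eq_one_iff]
  rintro ⟨l, hl⟩
  rw [div_eq_iff (Nat.cast_ne_zero.2 hN)] at hl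
  exact hk ⟨l, by rw [mul_comm]; exact_mod_cast hl⟩

lemma exists_normalizedSiegel_eq_of_le (hN : N ≠ 0) (hζ : 𝕖 (1 / N) ∈ K) {a : ℕ} {y : ℤ}
    (ha : a < N) (hay : a = 0 → ¬ (N : ℤ) ∣ y) :
    ∃ F ∈ taylorSubring K, (∀ w ∈ Metric.ball 0 1, F w ≠ 0) ∧ ∀ τ : ℍ,
      normalizedSiegel (a / N, y / N) τ =
        𝕖 (((a / N) ^ 2 - a / N + 1 / 6) / 2 * τ) * F (𝕖 (τ / N)) := by
  have hmem (k : ℤ) (b : ℕ) :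
      (fun w ↦ (1 - 𝕖 (k / N) * w ^ b) * eulerProd (w ^ N) (𝕖 (k / N) * w ^ b)) ∈
        taylorSubring K :=
    mul_mem (one_sub_mem_taylorSubring (expTwoPiI_intCast_div_mem hζ k) b)
      (eulerProd_pow_mem_taylorSubring hN (expTwoPiI_intCast_div_mem hζ k) b)
  refine ⟨_, neg_mem (mul_mem (hmem y a) (hmem (-y) (N - a))), fun w hw ↦ ?_, fun τ ↦ ?_⟩
  · rw [mem_ball_zero_iff] at hw
    exact neg_ne_zero.2 (mul_ne_zero
      (one_sub_mul_eulerProd_pow_ne_zero hN (norm_expTwoPiI_intCast_div y)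
        (fun h ↦ expTwoPiI_intCast_div_ne_one hN (hay h)) hw)
      (one_sub_mul_eulerProd_pow_ne_zero hN (norm_expTwoPiI_intCast_div (-y))
        (fun h ↦ absurd h (Nat.sub_ne_zero_of_lt ha)) hw))
  · have hN' : (N : ℂ) ≠ 0 := Nat.cast_ne_zero.2 hN
    have hz : 𝕖 (y / N) * 𝕖 (τ / N) ^ a = 𝕖 (a / N * τ + y / N) := by
      rw [expTwoPiI_pow, ← expTwoPiI_add]
      ring_nf
    have hτz : 𝕖 ((-y : ℤ) / N) * 𝕖 (τ / N) ^ (N - a) = 𝕖 (τ - (a / N * τ + y / N)) := by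
      rw [expTwoPiI_pow, ← expTwoPiI_add, Nat.cast_sub ha.le]
      congr 1
      push_cast
      field_simp
      ring
    have hτ : 𝕖 (τ / N) ^ N = 𝕖 τ := by rw [expTwoPiI_pow, mul_div_cancel₀ _ hN']
    rw [normalizedSiegel_eq _ τ (z := a / N * τ + y / N) (by push_cast; rfl)]
    simp only [Pi.neg_apply, Pi.mul_apply, hz, hτz, hτ]
    push_cast
    rfl

lemma exists_normalizedSiegel_eq (hN : N ≠ 0) (hζ : 𝕖 (1 / N) ∈ K) {x y : ℤ}
    (hxy : (N : ℤ) ∣ x → ¬ (N : ℤ) ∣ y) :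
    ∃ F ∈ taylorSubring K, (∀ w ∈ Metric.ball 0 1, F w ≠ 0) ∧ ∀ τ : ℍ,
      normalizedSiegel (x / N, y / N) τ = 𝕖 (siegelOrder N x * (τ / N)) * F (𝕖 (τ / N)) := by
  have hNZ : (N : ℤ) ≠ 0 := Nat.cast_ne_zero.2 hN
  have hNQ : (N : ℚ) ≠ 0 := Nat.cast_ne_zero.2 hN
  have hNC : (N : ℂ) ≠ 0 := Nat.cast_ne_zero.2 hN
  obtain ⟨a, ha⟩ := Int.eq_ofNat_of_zero_le (Int.emod_nonneg x hNZ)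
  have haN : a < N := by exact_mod_cast ha ▸ Int.emod_lt_of_pos x (by positivity)
  obtain ⟨F, hF, hF0, hFeq⟩ := exists_normalizedSiegel_eq_of_le hN hζ haN (y := y)
    fun h ↦ hxy (Int.dvd_of_emod_eq_zero (by rw [ha, h, Nat.cast_zero]))
  set c : ℂ := 𝕖 (1 / 2) ^ (x / N) * 𝕖 (-(x / N : ℤ) * (y / N : ℚ)) with hc
  have hcK : c ∈ K := by
    refine mul_mem (zpow_mem (expTwoPiI_half ▸ neg_mem (one_mem K)) _) ?_
    convert expTwoPiI_intCast_div_mem hζ (-(x / N) * y) using 2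
    push_cast
    ring
  have hc0 : c ≠ 0 := mul_ne_zero (zpow_ne_zero _ (expTwoPiI_ne_zero _)) (expTwoPiI_ne_zero _)
  have hx : (x / N : ℚ) = a / N + (x / N : ℤ) := by
    rw [div_add' _ _ _ hNQ]
    congr 1
    exact_mod_cast (ha ▸ Int.emod_add_mul_ediv x N).symm.trans (by ring)
  refine ⟨_, mul_mem (const_mem_taylorSubring hcK) hF, fun w hw ↦ mul_ne_zero hc0 (hF0 w hw),
    fun τ ↦ ?_⟩
  have hshift := normalizedSiegel_add_intCast (a / N, y / N) (x / N) τ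
  rw [hx, hshift, ← hc, hFeq, Pi.mul_apply, Function.const_apply, mul_left_comm]
  congr 2
  rw [siegelOrder, ha]
  push_cast
  field_simp
  ring

end Expansion

section ProductExpansion

variable {ι : Type*} {N : ℕ} {S : Finset ι} {m x y : ι → ℤ} {K : Subfield ℂ}

lemma gcd_two_mul_dvd_emod_sq_sub_sq (N : ℕ) (x : ℤ) :
    (Nat.gcd 2 N * N : ℤ) ∣ (x % N) ^ 2 - x ^ 2 := by
  set k := x / N
  have hx : (x % N) ^ 2 - x ^ 2 = (-(2 * (x * k)) + N * k ^ 2) * N := by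
    rw [Int.emod_def]
    ring
  rw [hx]
  refine mul_dvd_mul_right (dvd_add ?_ ?_) _
  · exact ((Int.natCast_dvd_natCast.2 (Nat.gcd_dvd_left 2 N)).mul_right _).neg_right
  · exact (Int.natCast_dvd_natCast.2 (Nat.gcd_dvd_right 2 N)).mul_right _

lemma two_mul_dvd_sum_emod (hsq : (Nat.gcd 2 N * N : ℤ) ∣ ∑ i ∈ S, m i * x i ^ 2) :
    2 * (N : ℤ) ∣ ∑ i ∈ S, m i * ((x i % N) ^ 2 - N * (x i % N)) := by
  have hemod : (Nat.gcd 2 N * N : ℤ) ∣ ∑ i ∈ S, m i * (x i % N) ^ 2 := by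
    refine (dvd_iff_dvd_of_dvd_sub ?_).2 hsq
    simp only [← Finset.sum_sub_distrib, ← mul_sub]
    exact Finset.dvd_sum fun i _ ↦ (gcd_two_mul_dvd_emod_sq_sub_sq N (x i)).mul_left _
  have hodd : Odd (N : ℤ) → Even (1 - N : ℤ) := fun h ↦ odd_one.sub_odd h
  have hsum : ∑ i ∈ S, m i * ((x i % N) ^ 2 - N * (x i % N)) =
      (1 - N) * ∑ i ∈ S, m i * (x i % N) ^ 2 -
        N * (∑ i ∈ S, m i * (x i % N) - ∑ i ∈ S, m i * (x i % N) ^ 2) := by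
    simp only [Finset.mul_sum, ← Finset.sum_sub_distrib]
    exact Finset.sum_congr rfl fun i _ ↦ by ring
  rw [hsum]
  exact dvd_sub (two_mul_dvd_mul_of_gcd_two_mul_dvd hodd hemod)
    (two_mul_dvd_mul_sum_sq_sub_sum N S m fun i ↦ x i % N)

lemma exists_sum_siegelOrder_eq_intCast (hN : N ≠ 0)
    (hsq : (Nat.gcd 2 N * N : ℤ) ∣ ∑ i ∈ S, m i * x i ^ 2)
    (hm : (12 : ℤ) ∣ (∑ i ∈ S, m i) * (Nat.gcd 12 N : ℤ)) :
    ∃ n₀ : ℤ, ∑ i ∈ S, m i * siegelOrder N (x i) = n₀ := by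
  have hNQ : (N : ℚ) ≠ 0 := Nat.cast_ne_zero.2 hN
  obtain ⟨k, hk⟩ := two_mul_dvd_sum_emod hsq
  obtain ⟨l, hl⟩ := hm.trans
    (mul_dvd_mul_left _ (Int.natCast_dvd_natCast.2 (Nat.gcd_dvd_right 12 N)))
  refine ⟨k + l, ?_⟩
  have hkQ := congrArg (Int.cast : ℤ → ℚ) hk
  have hlQ := congrArg (Int.cast : ℤ → ℚ) hl
  push_cast at hkQ hlQ ⊢
  calc ∑ i ∈ S, (m i : ℚ) * siegelOrder N (x i)
      = (∑ i ∈ S, (m i : ℚ) * (((x i % N : ℤ) : ℚ) ^ 2 - N * ((x i % N : ℤ) : ℚ))) / (2 * N) +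
          (∑ i ∈ S, (m i : ℚ)) * N / 12 := by
        simp only [siegelOrder, Finset.sum_div, Finset.sum_mul, ← Finset.sum_add_distrib]
        exact Finset.sum_congr rfl fun i _ ↦ by ring
    _ = k + l := by
        rw [hkQ, hlQ]
        field_simp

theorem exists_prod_normalizedSiegel_eq (hN : N ≠ 0) (hζ : 𝕖 (1 / N) ∈ K)
    (hxy : ∀ i ∈ S, (N : ℤ) ∣ x i → ¬ (N : ℤ) ∣ y i)
    (hsq : (Nat.gcd 2 N * N : ℤ) ∣ ∑ i ∈ S, m i * x i ^ 2)
    (hm : (12 : ℤ) ∣ (∑ i ∈ S, m i) * (Nat.gcd 12 N : ℤ)) :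
    ∃ n₀ : ℤ, ∃ G ∈ taylorSubring K, ∀ τ : ℍ,
      ∏ i ∈ S, normalizedSiegel (x i / N, y i / N) τ ^ m i =
        𝕖 (n₀ * (τ / N)) * G (𝕖 (τ / N)) := by
  obtain ⟨n₀, hn₀⟩ := exists_sum_siegelOrder_eq_intCast hN hsq hm
  choose! F hF hF0 hFeq using fun i hi ↦ exists_normalizedSiegel_eq hN hζ (hxy i hi)
  refine ⟨n₀, ∏ i ∈ S, F i ^ m i,
    prod_mem fun i hi ↦ zpow_mem_taylorSubring (hF i hi) (hF0 i hi) (m i), fun τ ↦ ?_⟩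
  have horder : (n₀ : ℂ) * (τ / N) = ∑ i ∈ S, m i * (siegelOrder N (x i) * ((τ : ℂ) / N)) := by
    simp only [← mul_assoc, ← Finset.sum_mul]
    congr 1
    exact_mod_cast congrArg (Rat.cast : ℚ → ℂ) hn₀.symm
  rw [horder, expTwoPiI_sum, Finset.prod_apply, ← Finset.prod_mul_distrib]
  refine Finset.prod_congr rfl fun i hi ↦ ?_
  rw [hFeq i hi, mul_zpow, expTwoPiI_zpow, Pi.pow_apply]

lemma exists_hasSum_of_mem_taylorSubring {F : ℂ → ℂ} (hF : F ∈ taylorSubring K) :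
    ∃ c : ℕ → ℂ, (∀ n, c n ∈ K) ∧ ∀ w ∈ Metric.ball 0 1, HasSum (fun n ↦ c n * w ^ n) (F w) := by
  refine ⟨fun n ↦ (n.factorial : ℂ)⁻¹ * iteratedDeriv n F 0,
    fun n ↦ mul_mem (inv_mem (natCast_mem K _)) (hF.2 n), fun w hw ↦ ?_⟩
  have htaylor := Complex.hasSum_taylorSeries_on_ball hF.1 hw
  simpa only [sub_zero, smul_eq_mul, mul_assoc, mul_comm, mul_left_comm] using htaylor

lemma qpow_add_natCast (N : ℕ) (k : ℤ) (n : ℕ) (τ : ℍ) :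
    qpow N (k + n) τ = 𝕖 (k * (τ / N)) * 𝕖 (τ / N) ^ n := by
  rw [expTwoPiI_pow, ← expTwoPiI_add, qpow, expTwoPiI]
  push_cast
  ring_nf

lemma norm_expTwoPiI_div_lt_one (hN : N ≠ 0) (τ : ℍ) : ‖𝕖 (τ / N)‖ < 1 := by
  refine (pow_lt_one_iff_of_nonneg (norm_nonneg _) hN).1 ?_
  rw [← norm_pow, expTwoPiI_pow, mul_div_cancel₀ _ (Nat.cast_ne_zero.2 hN)]
  exact norm_expTwoPiI_lt_one τ

theorem exists_hasSum_prod_normalizedSiegel (hN : N ≠ 0) (hζ : 𝕖 (1 / N) ∈ K)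
    (hxy : ∀ i ∈ S, (N : ℤ) ∣ x i → ¬ (N : ℤ) ∣ y i)
    (hsq : (Nat.gcd 2 N * N : ℤ) ∣ ∑ i ∈ S, m i * x i ^ 2)
    (hm : (12 : ℤ) ∣ (∑ i ∈ S, m i) * (Nat.gcd 12 N : ℤ)) :
    ∃ n₀ : ℤ, ∃ c : ℕ → ℂ, (∀ n, c n ∈ K) ∧ ∀ τ : ℍ,
      HasSum (fun n : ℕ ↦ c n * qpow N (n₀ + n) τ)
        (∏ i ∈ S, normalizedSiegel (x i / N, y i / N) τ ^ m i) := by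
  obtain ⟨n₀, G, hG, hprod⟩ := exists_prod_normalizedSiegel_eq hN hζ hxy hsq hm
  obtain ⟨c, hcK, hsum⟩ := exists_hasSum_of_mem_taylorSubring hG
  refine ⟨n₀, c, hcK, fun τ ↦ ?_⟩
  have hτ := mem_ball_zero_iff.2 (norm_expTwoPiI_div_lt_one hN τ)
  simpa only [hprod, qpow_add_natCast, mul_left_comm] using
    (hsum _ hτ).mul_left (𝕖 (n₀ * (τ / N)))

end ProductExpansion

section FiniteSupport

variable {ι : Type*} {m : ι → ℤ}

lemma dvd_sum_of_finsum_mul_eq {f : ι → ℚ} {φ : ι → ℤ} {d : ℤ} (hfin : (Function.support m).Finite)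
    (hf : ∀ i, m i ≠ 0 → f i = φ i) (h : ∃ k : ℤ, ∑ᶠ i, (m i : ℚ) * f i = k * d) :
    d ∣ ∑ i ∈ hfin.toFinset, m i * φ i := by
  obtain ⟨k, hk⟩ := h
  rw [finsum_eq_sum_of_support_subset (s := hfin.toFinset) _ fun i hi ↦
    hfin.mem_toFinset.2 (Int.cast_ne_zero.1 (left_ne_zero_of_mul (Function.mem_support.1 hi))),
    Finset.sum_congr rfl fun i hi ↦ by rw [hf i (hfin.mem_toFinset.1 hi)]] at hk
  exact ⟨k, by rw [mul_comm]; exact_mod_cast hk⟩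

lemma finprod_zpow_eq_prod {f g : ι → ℂ} (hfin : (Function.support m).Finite)
    (hfg : ∀ i, m i ≠ 0 → f i = g i) :
    ∏ᶠ i, f i ^ m i = ∏ i ∈ hfin.toFinset, g i ^ m i := by
  rw [finprod_eq_prod_of_mulSupport_subset (s := hfin.toFinset) _ fun i hi ↦
    hfin.mem_toFinset.2 fun h ↦ hi (by rw [h, zpow_zero])]
  exact Finset.prod_congr rfl fun i hi ↦ by rw [hfg i (hfin.mem_toFinset.1 hi)]

end FiniteSupport

section SiegelProd

variable {N : ℕ} {m x y : ℚ × ℚ → ℤ}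

lemma QuadraticRelations.of_finsum (hN : N ≠ 0) (hfin : (Function.support m).Finite)
    (hxy : ∀ r, m r ≠ 0 → r = ((x r : ℚ) / N, (y r : ℚ) / N))
    (hsq_left : ∃ k : ℤ, ∑ᶠ r : ℚ × ℚ, (m r : ℚ) * (N * r.1) ^ 2 = k * ((Nat.gcd 2 N : ℚ) * N))
    (hsq_right : ∃ k : ℤ, ∑ᶠ r : ℚ × ℚ, (m r : ℚ) * (N * r.2) ^ 2 = k * ((Nat.gcd 2 N : ℚ) * N))
    (hmul : ∃ k : ℤ, ∑ᶠ r : ℚ × ℚ, (m r : ℚ) * (N * r.1) * (N * r.2) = k * (N : ℚ)) :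
    QuadraticRelations N hfin.toFinset m x y := by
  have hNQ : (N : ℚ) ≠ 0 := Nat.cast_ne_zero.2 hN
  have hx (r) (hr : m r ≠ 0) : N * r.1 = x r := by
    rw [congrArg Prod.fst (hxy r hr), mul_div_cancel₀ _ hNQ]
  have hy (r) (hr : m r ≠ 0) : N * r.2 = y r := by
    rw [congrArg Prod.snd (hxy r hr), mul_div_cancel₀ _ hNQ]
  simp only [mul_assoc (m _ : ℚ)] at hmul
  exact
    { dvd_sum_sq_left := dvd_sum_of_finsum_mul_eq (f := fun r ↦ (N * r.1) ^ 2) hfin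
        (fun r hr ↦ by rw [hx r hr, Int.cast_pow]) (mod_cast hsq_left)
      dvd_sum_sq_right := dvd_sum_of_finsum_mul_eq (f := fun r ↦ (N * r.2) ^ 2) hfin
        (fun r hr ↦ by rw [hy r hr, Int.cast_pow]) (mod_cast hsq_right)
      dvd_sum_mul := dvd_sum_of_finsum_mul_eq (f := fun r ↦ N * r.1 * (N * r.2)) hfin
        (fun r hr ↦ by rw [hx r hr, hy r hr, Int.cast_mul]) (mod_cast hmul) }

lemma not_dvd_of_nonIntegral {a b : ℤ} (hN : N ≠ 0) (h : NonIntegral (a / N, b / N))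
    (ha : (N : ℤ) ∣ a) : ¬ (N : ℤ) ∣ b := by
  have hNQ : (N : ℚ) ≠ 0 := Nat.cast_ne_zero.2 hN
  rintro ⟨l, rfl⟩
  obtain ⟨k, rfl⟩ := ha
  exact h ⟨k, l, by push_cast; rw [mul_div_cancel_left₀ _ hNQ, mul_div_cancel_left₀ _ hNQ]⟩

lemma siegelProd_eq_zetaFactor_mul_prod (hfin : (Function.support m).Finite)
    (hxy : ∀ r, m r ≠ 0 → r = ((x r : ℚ) / N, (y r : ℚ) / N)) (τ : ℍ) :
    siegelProd m τ =
      zetaFactor m * ∏ r ∈ hfin.toFinset, siegel (x r / N, y r / N) τ ^ m r := by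
  rw [siegelProd, finprod_zpow_eq_prod hfin fun r hr ↦ congrArg (siegel · τ) (hxy r hr)]

lemma zetaFactor_eq_prod (hfin : (Function.support m).Finite)
    (hxy : ∀ r, m r ≠ 0 → r = ((x r : ℚ) / N, (y r : ℚ) / N)) :
    zetaFactor m =
      ∏ r ∈ hfin.toFinset, 𝕖 ((y r / N : ℚ) * (1 - (x r / N : ℚ)) / 2) ^ m r := by
  rw [← finprod_zpow_eq_prod (f := fun r : ℚ × ℚ ↦ 𝕖 (r.2 * (1 - r.1) / 2)) hfin
    fun r hr ↦ congrArg (fun r : ℚ × ℚ ↦ 𝕖 (r.2 * (1 - r.1) / 2)) (hxy r hr), zetaFactor]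
  refine finprod_congr fun r ↦ ?_
  rw [expTwoPiI_zpow, expTwoPiI]
  ring_nf

lemma siegelProd_eq_prod_normalizedSiegel (hfin : (Function.support m).Finite)
    (hxy : ∀ r, m r ≠ 0 → r = ((x r : ℚ) / N, (y r : ℚ) / N)) (τ : ℍ) :
    siegelProd m τ = ∏ r ∈ hfin.toFinset, normalizedSiegel (x r / N, y r / N) τ ^ m r := by
  simp only [siegelProd_eq_zetaFactor_mul_prod hfin hxy, zetaFactor_eq_prod hfin hxy,
    normalizedSiegel, mul_zpow, Finset.prod_mul_distrib]

end SiegelProd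

/-- modularity criterion for products of Siegel functions. Under the
stated congruence conditions, `ζ ∏_r g_r^{m(r)}` is `Γ(N)`-invariant and its
Fourier coefficients lie in `ℚ(ζ_N)`. -/
theorem statement8 (N : ℕ) (hN : 1 < N) (m : ℚ × ℚ → ℤ)
    (hmem : ∀ r : ℚ × ℚ, m r ≠ 0 → InDen N r ∧ NonIntegral r)
    (hfin : (Function.support m).Finite)
    (h1 : ∃ k : ℤ, ∑ᶠ r : ℚ × ℚ, (m r : ℚ) * ((N : ℚ) * r.1) ^ 2
            = (k : ℚ) * ((Nat.gcd 2 N : ℚ) * N))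
    (h2 : ∃ k : ℤ, ∑ᶠ r : ℚ × ℚ, (m r : ℚ) * ((N : ℚ) * r.2) ^ 2
            = (k : ℚ) * ((Nat.gcd 2 N : ℚ) * N))
    (h3 : ∃ k : ℤ, ∑ᶠ r : ℚ × ℚ, (m r : ℚ) * ((N : ℚ) * r.1) * ((N : ℚ) * r.2)
            = (k : ℚ) * N)
    (h4 : (12 : ℤ) ∣ (∑ᶠ r : ℚ × ℚ, m r) * (Nat.gcd 12 N : ℤ)) :
    (∀ γ ∈ CongruenceSubgroup.Gamma N, ∀ τ : ℍ, siegelProd m (γ • τ) = siegelProd m τ) ∧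
    (∃ n₀ : ℤ, ∃ c : ℕ → ℂ,
      (∀ n : ℕ, c n ∈ IntermediateField.adjoin ℚ
        ({Complex.exp (2 * (Real.pi : ℂ) * Complex.I / N)} : Set ℂ)) ∧
      ∀ τ : ℍ, HasSum (fun n : ℕ => c n * qpow N (n₀ + n) τ) (siegelProd m τ)) := by
  have hN0 : N ≠ 0 := by lia
  choose! x y hxy using fun r hr ↦ (hmem r hr).1
  have hquad : QuadraticRelations N hfin.toFinset m x y := .of_finsum hN0 hfin hxy h1 h2 h3
  have hsum : (12 : ℤ) ∣ (∑ r ∈ hfin.toFinset, m r) * (Nat.gcd 12 N : ℤ) :=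
    finsum_eq_sum m hfin ▸ h4
  have hndvd (r) (hr : r ∈ hfin.toFinset) : (N : ℤ) ∣ x r → ¬ (N : ℤ) ∣ y r := by
    have hr0 : m r ≠ 0 := hfin.mem_toFinset.1 hr
    exact not_dvd_of_nonIntegral hN0 (hxy r hr0 ▸ (hmem r hr0).2)
  refine ⟨fun γ hγ τ ↦ ?_, ?_⟩
  · simp only [siegelProd_eq_zetaFactor_mul_prod hfin hxy,
      hquad.prod_siegel_smul hsum hN0 hγ τ]
  · simp only [siegelProd_eq_prod_normalizedSiegel hfin hxy]
    refine exists_hasSum_prod_normalizedSiegel (K := (IntermediateField.adjoin ℚ _).toSubfield)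
      hN0 (IntermediateField.subset_adjoin ℚ _ ?_) hndvd hquad.dvd_sum_sq_left hsum
    rw [expTwoPiI, mul_one_div, Set.mem_singleton_iff]
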